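/- arXiv:math/0005057 — 5 statements merged into one kernel-verified Lean document; each statement's English description precedes it below -/
import Mathlib

section
/- The relative spin lift ads_𝔭 restricted to 𝔥 is a spin representation of 𝔥 on Cl(𝔤): for all Z, W ∈ 𝔥 and all Y ∈ 𝔭 one has ads_𝔭(Z)·ι(Y) − ι(Y)·ads_𝔭(Z) = ι([Z,Y]) and ads_𝔭(Z)·ads_𝔭(W) − ads_𝔭(W)·ads_𝔭(Z) = ads_𝔭([Z,W]). -/
open CliffordAlgebra

/-!
For `D` skew with respect to `B`, the commutator
`⁅ι a * ι b, ι y⁆ = 2 B(b, y) ι a - 2 B(a, y) ι b` turns the two halves of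
`⁅-¼ ∑ ι(Y*ᵢ) ι(D Yᵢ), ι y⁆` into the expansions of `D y` in the families `Yᵢ` and `Y*ᵢ`, so that
`-¼ ∑ ι(Y*ᵢ) ι(D Yᵢ)` acts on vectors as `D`. As a commutator is a derivation, it then acts on
`∑ ι(Y*ᵢ) ι(E Yᵢ)` through `D` on both factors; the tensor `∑ Y*ᵢ ⊗ Yᵢ` being killed by `D`, the
result is `∑ ι(Y*ᵢ) ι(⁅D, E⁆ Yᵢ)`.

On `𝔭` this applies to the skew operators `D = π_𝔭 ∘ ad X`, `X ∈ 𝔤`. They satisfy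
`D_⁅Z, X⁆ = ⁅D_Z, D_X⁆` as soon as `ad Z` preserves `𝔭`, because `ad Z` then commutes with the
orthogonal projection onto `𝔭`.
-/

open LinearMap (BilinForm)

section DualFrame

variable {k M N I : Type*} [CommRing k] [AddCommGroup M] [Module k M] [AddCommGroup N] [Module k N]
  [Fintype I] {B : BilinForm k M} {b d : I → M}

/-- The families `b` and `d` reproduce every vector through `y = ∑ i, B (d i) y • b i`, as a basis
`b` and its `B`-dual basis `d` do. They serve to write the quadratic elements of the spin lift. -/
def IsDualFrame (B : BilinForm k M) (b d : I → M) : Prop :=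
  ∀ y, ∑ i, B (d i) y • b i = y

lemma sum_dual_smul_of_mem_span [DecidableEq I]
    (hdual : ∀ i j, B (d i) (b j) = if i = j then 1 else 0) {y : M}
    (hy : y ∈ Submodule.span k (Set.range b)) : ∑ i, B (d i) y • b i = y := by
  let T : M →ₗ[k] M := ∑ i, (B (d i)).smulRight (b i)
  have hT : Set.EqOn T (LinearMap.id : M →ₗ[k] M) (Set.range b) := by
    rintro _ ⟨j, rfl⟩
    simp [T, hdual]
  simpa [T] using LinearMap.eqOn_span hT hy

lemma IsDualFrame.ext (h : IsDualFrame B b d) {x y : M} (hxy : ∀ z, B z x = B z y) : x = y := by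
  rw [← h x, ← h y]
  simp only [hxy]

lemma IsDualFrame.symm (h : IsDualFrame B b d) (hB : B.IsSymm) : IsDualFrame B d b := by
  refine fun y ↦ h.ext fun z ↦ ?_
  calc B z (∑ i, B (b i) y • d i) = B (∑ i, B (d i) z • b i) y := by
        simp only [map_sum, map_smul, LinearMap.sum_apply, LinearMap.smul_apply, smul_eq_mul,
          hB.eq z, mul_comm]
    _ = B z y := by rw [h z]

lemma IsDualFrame.sum_apply_skewAdjoint (h : IsDualFrame B b d) (hB : B.IsSymm)
    {D : Module.End k M} (hD : B.IsSkewAdjoint D) (Φ : M →ₗ[k] M →ₗ[k] N) :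
    ∑ i, Φ (D (d i)) (b i) = -∑ i, Φ (d i) (D (b i)) := by
  have hskew (i j : I) : B (b j) (D (d i)) = -B (d i) (D (b j)) := by
    rw [hB.eq, hD, Pi.neg_apply, map_neg]
  calc ∑ i, Φ (D (d i)) (b i)
      = ∑ i, Φ (∑ j, B (b j) (D (d i)) • d j) (b i) := by simp only [h.symm hB _]
    _ = -∑ j, Φ (d j) (∑ i, B (d i) (D (b j)) • b i) := by
        simp only [hskew, map_sum, map_smul, LinearMap.sum_apply, LinearMap.smul_apply, neg_smul,
          map_neg, LinearMap.neg_apply, Finset.sum_neg_distrib]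
        rw [Finset.sum_comm]
    _ = -∑ j, Φ (d j) (D (b j)) := by simp only [h _]

end DualFrame

section SpinLift

variable {k M A I : Type*} [CommRing k] [AddCommGroup M] [Module k M] [Ring A] [Algebra k A]
  {B : BilinForm k M} {f : M →ₗ[k] A}

lemma lie_mul_of_mul_self (hB : B.IsSymm) (hf : ∀ x, f x * f x = algebraMap k A (B x x))
    (a b y : M) : ⁅f a * f b, f y⁆ = f ((2 * B b y) • a - (2 * B a y) • b) := by
  have hswap (x z : M) : f x * f z + f z * f x = algebraMap k A (2 * B x z) := by
    rw [mul_add_swap_eq_polar_of_forall_mul_self_eq (Q := B.toQuadraticMap) f hf,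
      LinearMap.BilinMap.polar_toQuadraticMap, hB.eq z, two_mul]
  calc ⁅f a * f b, f y⁆ = f a * (f b * f y + f y * f b) - (f a * f y + f y * f a) * f b := by
        rw [Ring.lie_def]
        noncomm_ring
    _ = f ((2 * B b y) • a - (2 * B a y) • b) := by
        rw [hswap, hswap, ← Algebra.commutes, ← Algebra.smul_def, ← Algebra.smul_def, map_sub,
          map_smul, map_smul]

variable [Invertible (4 : k)] [Fintype I] {b d : I → M}

/-- The quadratic element of `A` attached to an endomorphism `D` of `M`, where `f : M → A` satisfies
the Clifford relation `f x ^ 2 = B x x` and `b`, `d` are dual frames. For skew-adjoint `D`, its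
commutator with `f y` is `f (D y)`. -/
def spinLift (f : M →ₗ[k] A) (b d : I → M) (D : Module.End k M) : A :=
  (-⅟(4 : k)) • ∑ i, f (d i) * f (D (b i))

lemma lie_spinLift_apply (hB : B.IsSymm) (hf : ∀ x, f x * f x = algebraMap k A (B x x))
    (hbd : IsDualFrame B b d) {D : Module.End k M} (hD : B.IsSkewAdjoint D) (y : M) :
    ⁅spinLift f b d D, f y⁆ = f (D y) := by
  have hexpand_d : ∑ i, B (D (b i)) y • d i = -D y := by
    rw [← map_neg, ← hbd.symm hB (D (-y))]
    simp only [hD _ y, Pi.neg_apply, map_neg]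
  have hexpand_b : ∑ i, B (d i) y • D (b i) = D y := by
    simp only [← map_smul, ← map_sum, hbd y]
  calc ⁅spinLift f b d D, f y⁆
      = (-⅟(4 : k)) • ∑ i, ⁅f (d i) * f (D (b i)), f y⁆ := by
        simp only [spinLift, Ring.lie_def, smul_mul_assoc, mul_smul_comm, ← smul_sub,
          Finset.sum_mul, Finset.mul_sum, ← Finset.sum_sub_distrib]
    _ = f ((-⅟(4 : k)) • ((2 : k) • ∑ i, B (D (b i)) y • d i
          - (2 : k) • ∑ i, B (d i) y • D (b i))) := by
        simp only [lie_mul_of_mul_self hB hf, map_smul, map_sub, map_sum, Finset.sum_sub_distrib,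
          Finset.smul_sum, mul_smul]
    _ = f ((⅟(4 : k) * 4) • D y) := by
        rw [hexpand_d, hexpand_b]
        congr 1
        module
    _ = f (D y) := by rw [invOf_mul_self, one_smul]

lemma spinLift_lie (hB : B.IsSymm) (hf : ∀ x, f x * f x = algebraMap k A (B x x))
    (hbd : IsDualFrame B b d) {D : Module.End k M} (hD : B.IsSkewAdjoint D) (E : Module.End k M) :
    spinLift f b d ⁅D, E⁆ = ⁅spinLift f b d D, spinLift f b d E⁆ := by
  have hleibniz (x y : M) :
      ⁅spinLift f b d D, f x * f y⁆ = f (D x) * f y + f x * f (D y) := by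
    rw [← lie_spinLift_apply hB hf hbd hD x, ← lie_spinLift_apply hB hf hbd hD y]
    simp only [Ring.lie_def]
    noncomm_ring
  have hinvariant : ∑ i, f (D (d i)) * f (E (b i)) = -∑ i, f (d i) * f (E (D (b i))) :=
    hbd.sum_apply_skewAdjoint hB hD ((LinearMap.mul k A).compl₁₂ f (f ∘ₗ E))
  calc spinLift f b d ⁅D, E⁆
      = (-⅟(4 : k)) • (∑ i, f (D (d i)) * f (E (b i)) + ∑ i, f (d i) * f (D (E (b i)))) := by
        rw [hinvariant, neg_add_eq_sub, ← Finset.sum_sub_distrib]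
        simp only [spinLift, Ring.lie_def, LinearMap.sub_apply, Module.End.mul_apply, map_sub,
          mul_sub]
    _ = (-⅟(4 : k)) • ∑ i, ⁅spinLift f b d D, f (d i) * f (E (b i))⁆ := by
        simp only [hleibniz, Finset.sum_add_distrib]
    _ = ⁅spinLift f b d D, spinLift f b d E⁆ := by
        simp only [spinLift.eq_def f b d E, Ring.lie_def, smul_mul_assoc, mul_smul_comm, ← smul_sub,
          Finset.sum_mul, Finset.mul_sum, ← Finset.sum_sub_distrib]

end SpinLift

section OrthogonalProjection

variable {k M : Type*} [CommRing k] [AddCommGroup M] [Module k M] {B : BilinForm k M}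
  {N P : Submodule k M}

lemma bilin_proj_apply_of_le_orthogonal (hNP : Codisjoint N P) (hP : P ≤ B.orthogonal N)
    {p : M →ₗ[k] M} (hpP : ∀ y ∈ P, p y = y) (hpN : ∀ z ∈ N, p z = 0) (x : M) {y : M}
    (hy : y ∈ P) : B (p x) y = B x y := by
  suffices B.flip y ∘ₗ p = B.flip y from LinearMap.congr_fun this x
  refine LinearMap.ext_on_codisjoint hNP (fun z hz ↦ ?_) fun z hz ↦ ?_
  · simpa [hpN z hz] using (hP hy z hz).symm
  · simp [hpP z hz]

end OrthogonalProjection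

section Lie

variable {k g I : Type*} [CommRing k] [LieRing g] [LieAlgebra k g] {B : BilinForm k g}

lemma lieInvariant_of_apply_lie (hinv : ∀ X Y Z : g, B ⁅X, Y⁆ Z = B X ⁅Y, Z⁆) :
    B.lieInvariant g := fun Z X Y ↦ by
  rw [← lie_skew, map_neg, LinearMap.neg_apply, hinv]

lemma lie_mem_orthogonal (hinv : B.lieInvariant g) {H : LieSubalgebra k g} {Z Y : g} (hZ : Z ∈ H)
    (hY : Y ∈ B.orthogonal H.toSubmodule) : ⁅Z, Y⁆ ∈ B.orthogonal H.toSubmodule := fun W hW ↦ by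
  rw [← neg_eq_zero, ← hinv]
  exact hY _ (H.lie_mem hZ hW)

variable {P : Submodule k g} {π : g →ₗ[k] P}

/-- The compression `π ∘ ad X` of `ad X` to the subspace `P`, for a projection `π` onto `P`. It is
the operator on `𝔭` whose spin lift is `ads_𝔭 X`. -/
def compressedAd (π : g →ₗ[k] P) (X : g) : Module.End k P :=
  π ∘ₗ (LieAlgebra.ad k g X).domRestrict P

lemma compressedAd_apply (X : g) (Y : P) : compressedAd π X Y = π ⁅X, (Y : g)⁆ := rfl

lemma isSkewAdjoint_compressedAd (hB : B.IsSymm) (hinv : B.lieInvariant g)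
    (hπ : ∀ X, ∀ Y : P, B (π X) Y = B X Y) (X : g) :
    (B.restrict P).IsSkewAdjoint (compressedAd π X) := fun Y Z ↦ by
  calc B (π ⁅X, (Y : g)⁆) Z = -B Y ⁅X, (Z : g)⁆ := by rw [hπ, hinv]
    _ = -B Y (π ⁅X, (Z : g)⁆) := by rw [hB.eq, ← hπ, hB.eq]
    _ = B Y (-π ⁅X, (Z : g)⁆ : P) := by rw [Submodule.coe_neg, map_neg]

variable [Fintype I] {b d : I → P}

lemma proj_coe (hB : B.IsSymm) (hπ : ∀ X, ∀ Y : P, B (π X) Y = B X Y)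
    (hbd : IsDualFrame (B.restrict P) b d) (Y : P) : π Y = Y := by
  refine hbd.ext fun W ↦ ?_
  calc B W (π Y) = B Y W := by rw [hB.eq, hπ]
    _ = B W Y := hB.eq _ _

lemma coe_proj_lie (hB : B.IsSymm) (hinv : B.lieInvariant g)
    (hπ : ∀ X, ∀ Y : P, B (π X) Y = B X Y) (hbd : IsDualFrame (B.restrict P) b d) {Z : g}
    (hZ : ∀ Y ∈ P, ⁅Z, Y⁆ ∈ P) (X : g) : (π ⁅Z, X⁆ : g) = ⁅Z, (π X : g)⁆ := by
  have hπ' (Y : P) (X : g) : B Y (π X) = B Y X := by rw [hB.eq, hπ, hB.eq]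
  suffices π ⁅Z, X⁆ = ⟨⁅Z, (π X : g)⁆, hZ _ (π X).2⟩ from congrArg Subtype.val this
  refine hbd.ext fun Y ↦ ?_
  calc B Y (π ⁅Z, X⁆) = -B ⁅Z, (Y : g)⁆ X := by rw [hπ', hinv, neg_neg]
    _ = -B ⁅Z, (Y : g)⁆ (π X) := by rw [hπ' ⟨_, hZ Y Y.2⟩]
    _ = B Y ⁅Z, (π X : g)⁆ := by rw [hinv, neg_neg]

lemma compressedAd_lie (hB : B.IsSymm) (hinv : B.lieInvariant g)
    (hπ : ∀ X, ∀ Y : P, B (π X) Y = B X Y) (hbd : IsDualFrame (B.restrict P) b d) {Z : g}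
    (hZ : ∀ Y ∈ P, ⁅Z, Y⁆ ∈ P) (X : g) :
    compressedAd π ⁅Z, X⁆ = ⁅compressedAd π Z, compressedAd π X⁆ := by
  have hcomm := coe_proj_lie hB hinv hπ hbd hZ
  have hid := proj_coe hB hπ hbd
  ext Y
  have hZX : π ⁅Z, ⁅X, (Y : g)⁆⁆ = π ⁅Z, (π ⁅X, (Y : g)⁆ : g)⁆ :=
    Subtype.ext <| by rw [hcomm, hcomm, hid]
  have hXZ : (π ⁅Z, (Y : g)⁆ : g) = ⁅Z, (Y : g)⁆ := by rw [hcomm, hid]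
  simp only [compressedAd_apply, Ring.lie_def, LinearMap.sub_apply, Module.End.mul_apply, lie_lie,
    map_sub, hZX, hXZ]

end Lie

theorem ads_p_is_spin_rep_general {k : Type*} [CommRing k] [Invertible (4 : k)]
    {g : Type*} [LieRing g] [LieAlgebra k g] {B : BilinForm k g} (hsymm : B.IsSymm)
    (hinv : B.lieInvariant g) {P : Submodule k g} {pp : g →ₗ[k] g} (hpp_mem : ∀ X, pp X ∈ P)
    (hpp : ∀ X, ∀ Y ∈ P, B (pp X) Y = B X Y)
    {I : Type*} [Fintype I] {bp : I → g} (hbp : ∀ i, bp i ∈ P) {bpd : I → g}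
    (hbpd : ∀ i, bpd i ∈ P) (hframe : ∀ Y ∈ P, ∑ i, B (bpd i) Y • bp i = Y)
    {Q : QuadraticForm k g} (hQ : ∀ X, Q X = B X X) {adsp : g → CliffordAlgebra Q}
    (hadsp : ∀ X, adsp X = (-⅟(4 : k)) • ∑ i, ι Q (bpd i) * ι Q (pp ⁅X, bp i⁆)) :
    (∀ X, ∀ Y ∈ P, ⁅adsp X, ι Q Y⁆ = ι Q (pp ⁅X, Y⁆)) ∧
      ∀ Z, (∀ Y ∈ P, ⁅Z, Y⁆ ∈ P) → ∀ X, adsp ⁅Z, X⁆ = ⁅adsp Z, adsp X⁆ := by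
  let π : g →ₗ[k] P := pp.codRestrict P hpp_mem
  let b (i : I) : P := ⟨bp i, hbp i⟩
  let d (i : I) : P := ⟨bpd i, hbpd i⟩
  let f : P →ₗ[k] CliffordAlgebra Q := ι Q ∘ₗ P.subtype
  have hB : (B.restrict P).IsSymm := ⟨fun Y W ↦ hsymm.eq Y W⟩
  have hπ (X : g) (Y : P) : B (π X) Y = B X Y := hpp X Y Y.2
  have hbd : IsDualFrame (B.restrict P) b d := fun Y ↦ Subtype.ext <| by
    simpa [b, d] using hframe Y Y.2
  have hf (Y : P) : f Y * f Y = algebraMap k _ (B Y Y) := by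
    rw [← hQ]
    exact ι_sq_scalar Q Y
  have hskew := isSkewAdjoint_compressedAd hsymm hinv hπ
  have hlift (X : g) : adsp X = spinLift f b d (compressedAd π X) := hadsp X
  refine ⟨fun X Y hY ↦ ?_, fun Z hZ X ↦ ?_⟩
  · rw [hlift]
    exact lie_spinLift_apply hB hf hbd (hskew X) ⟨Y, hY⟩
  · rw [hlift, hlift, hlift, compressedAd_lie hsymm hinv hπ hbd hZ]
    exact spinLift_lie hB hf hbd (hskew Z) _

/-- The relative spin lift `ads_𝔭(X) = -(1/4) Σᵢ ι(Y*ᵢ) ι(π_𝔭 [X, Yᵢ])`, restricted to the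
subalgebra `𝔥`, is a spin representation of `𝔥` on `Cl(𝔤)`: for all `Z, W ∈ 𝔥` and `Y ∈ 𝔭`,
`ads_𝔭 Z · ι Y - ι Y · ads_𝔭 Z = ι ⁅Z, Y⁆` and
`ads_𝔭 Z · ads_𝔭 W - ads_𝔭 W · ads_𝔭 Z = ads_𝔭 ⁅Z, W⁆`. -/
theorem ads_p_is_spin_rep
    {k : Type*} [Field k] [CharZero k]
    {g : Type*} [LieRing g] [LieAlgebra k g]
    (B : LinearMap.BilinForm k g)
    (hsymm : ∀ X Y : g, B X Y = B Y X)
    (hnondeg : B.Nondegenerate)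
    (hinv : ∀ X Y Z : g, B ⁅X, Y⁆ Z = B X ⁅Y, Z⁆)
    (H : LieSubalgebra k g) (P : Submodule k g)
    (hHnd : ∀ Z ∈ H, (∀ W ∈ H, B Z W = 0) → Z = 0)
    (hP : P = B.orthogonal H.toSubmodule)
    (hcompl : IsCompl H.toSubmodule P)
    (pp : g →ₗ[k] g)
    (hpp_mem : ∀ X : g, pp X ∈ P)
    (hpp_P : ∀ Y ∈ P, pp Y = Y)
    (hpp_H : ∀ Z ∈ H, pp Z = 0)
    {I : Type*} [Fintype I] [DecidableEq I]
    (bp : I → g) (hbp : ∀ i, bp i ∈ P)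
    (bpd : I → g) (hbpd : ∀ i, bpd i ∈ P)
    (hbp_indep : LinearIndependent k bp)
    (hbp_span : Submodule.span k (Set.range bp) = P)
    (hdualp : ∀ i j, B (bpd i) (bp j) = if i = j then 1 else 0)
    (Q : QuadraticForm k g) (hQ : ∀ X : g, Q X = B X X)
    (adsp : g → CliffordAlgebra Q)
    (hadsp : ∀ X : g, adsp X = (-(1/4 : k)) • ∑ i, ι Q (bpd i) * ι Q (pp ⁅X, bp i⁆)) :
    ∀ Z ∈ H, ∀ W ∈ H, ∀ Y ∈ P,
      (adsp Z * ι Q Y - ι Q Y * adsp Z = ι Q ⁅Z, Y⁆) ∧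
      (adsp Z * adsp W - adsp W * adsp Z = adsp ⁅Z, W⁆) := by
  intro Z hZ W _ Y hY
  let _ : Invertible (4 : k) := invertibleOfNonzero (OfNat.ofNat_ne_zero 4)
  have hlie := lieInvariant_of_apply_lie hinv
  have hstab : ∀ X ∈ P, ⁅Z, X⁆ ∈ P := hP ▸ fun _ ↦ lie_mem_orthogonal hlie hZ
  obtain ⟨hvector, hbracket⟩ := ads_p_is_spin_rep_general (adsp := adsp) ⟨hsymm⟩ hlie hpp_mem
    (fun X _ ↦ bilin_proj_apply_of_le_orthogonal hcompl.codisjoint hP.le hpp_P hpp_H X) hbp hbpd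
    (fun _ hX ↦ sum_dual_smul_of_mem_span hdualp (hbp_span ▸ hX)) hQ (by simpa using hadsp)
  exact ⟨hpp_P _ (hstab Y hY) ▸ hvector Z Y hY, (hbracket Z hstab W).symm⟩
end

section
/- Decomposition of the cubic Dirac operator: in A = U(𝔤) ⊗ Cl(𝔤), the universal cubic Dirac operator of 𝔤 splits as D_𝔤 = D'_𝔥 + D_{𝔤/𝔥}, where D'_𝔥 is the twisted Dirac operator on 𝔥 and D_{𝔤/𝔥} is Kostant's cubic Dirac operator. -/
open CliffordAlgebra TensorProduct

/-!
The first-order terms of the two sides agree, so the claim is an identity between cubic elements of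
the Clifford algebra. Write `C(𝔞, 𝔟) = ∑ x*_a y*_i [x_a, y_i]` for dual families `x`, `x*` of `𝔞`
and `y`, `y*` of `𝔟`. Then `C(𝔤, 𝔤)` has four blocks. Orthogonal vectors anticommute and the bracket
is antisymmetric, so `C(𝔭, 𝔥) = C(𝔥, 𝔭)`. By invariance the `𝔥`-part of `[Y_i, Y_j]` is
`∑_a B([Z_a, Y_i], Y_j) Z*_a`; summing over `j` turns its contribution to `C(𝔭, 𝔭)` into
`∑ Y*_i [Z_a, Y_i] Z*_a`, which is again `C(𝔥, 𝔭)` after moving `Z*_a` past two vectors of `𝔭`.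
These three copies of `C(𝔥, 𝔭)` are the spin action of `𝔥` on `𝔭` that twists the Dirac operator.
The coefficients of `ads_𝔭` and `γ` only enter through their ratio: `-1/4 = 3 · 2 · (-1/24)`.
-/

section DualFamilies

variable {R M U : Type*} [CommRing R] [AddCommGroup M] [Module R M] [Fintype U] [DecidableEq U]
  {B : LinearMap.BilinForm R M} {x xd : U → M}

lemma sum_dual_apply_smul (hdual : ∀ i j, B (xd i) (x j) = if i = j then 1 else 0)
    (hspan : Submodule.span R (Set.range x) = ⊤) (w : M) : ∑ i, B (xd i) w • x i = w := by
  have hid : ∑ i, (B (xd i)).smulRight (x i) = LinearMap.id :=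
    LinearMap.ext_on_range hspan fun j ↦ by simp [hdual]
  simpa using LinearMap.congr_fun hid w

lemma sum_apply_smul_dual (hB : B.IsSymm)
    (hdual : ∀ i j, B (xd i) (x j) = if i = j then 1 else 0)
    (hspan : Submodule.span R (Set.range x) = ⊤) (w : M) : ∑ i, B w (x i) • xd i = w := by
  have hpair (j : U) : B (xd j) (∑ i, B w (x i) • xd i) = B (xd j) w :=
    calc B (xd j) (∑ i, B w (x i) • xd i)
        = B w (∑ i, B (xd i) (xd j) • x i) := by
          simp only [map_sum, map_smul, smul_eq_mul]
          exact Finset.sum_congr rfl fun i _ ↦ by rw [hB.eq (xd j), mul_comm]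
      _ = B (xd j) w := by rw [sum_dual_apply_smul hdual hspan, hB.eq]
  rw [← sum_dual_apply_smul hdual hspan (∑ i, B w (x i) • xd i)]
  simp only [hpair, sum_dual_apply_smul hdual hspan]

end DualFamilies

/-- Families `z`, `zd` of a submodule `H` and `y`, `yd` of its `B`-orthogonal complement, each pair
dual with respect to `B`, such that `z` and `y` together span the whole module. -/
structure IsAdaptedDualPair {R M A I : Type*} [CommRing R] [AddCommGroup M] [Module R M]
    [DecidableEq A] [DecidableEq I] (B : LinearMap.BilinForm R M) (H : Submodule R M)
    (z zd : A → M) (y yd : I → M) : Prop where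
  left_mem (a : A) : z a ∈ H
  left_dual_mem (a : A) : zd a ∈ H
  right_mem (i : I) : y i ∈ B.orthogonal H
  right_dual_mem (i : I) : yd i ∈ B.orthogonal H
  left_dual (a c : A) : B (zd a) (z c) = if a = c then 1 else 0
  right_dual (i j : I) : B (yd i) (y j) = if i = j then 1 else 0
  span_eq_top : Submodule.span R (Set.range (Sum.elim z y)) = ⊤

namespace IsAdaptedDualPair

variable {R M A I : Type*} [CommRing R] [AddCommGroup M] [Module R M]
  [DecidableEq A] [DecidableEq I] {B : LinearMap.BilinForm R M} {H : Submodule R M}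
  {z zd : A → M} {y yd : I → M}

lemma sum_add_sum [Fintype A] [Fintype I] (h : IsAdaptedDualPair B H z zd y yd) (hB : B.IsSymm)
    (w : M) : ∑ a, B w (z a) • zd a + ∑ i, B w (y i) • yd i = w := by
  have hdual (u v : A ⊕ I) :
      B (Sum.elim zd yd u) (Sum.elim z y v) = if u = v then 1 else 0 := by
    rcases u with a | i <;> rcases v with c | j
    · simp [h.left_dual]
    · simpa using h.right_mem j _ (h.left_dual_mem a)
    · simpa [hB.eq (yd i)] using h.right_dual_mem i _ (h.left_mem c)
    · simp [h.right_dual]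
  simpa only [Fintype.sum_sum_type, Sum.elim_inl, Sum.elim_inr] using
    sum_apply_smul_dual hB hdual h.span_eq_top w

lemma sum_right_of_mem_orthogonal [Finite A] [Fintype I] (h : IsAdaptedDualPair B H z zd y yd)
    (hB : B.IsSymm) {w : M} (hw : w ∈ B.orthogonal H) : ∑ i, B w (y i) • yd i = w := by
  cases nonempty_fintype A
  have hwz (a : A) : B w (z a) = 0 := (hB.eq _ _).trans (hw _ (h.left_mem a))
  simpa [hwz] using h.sum_add_sum hB w

lemma sum_left_add_proj [Fintype A] [Finite I] (h : IsAdaptedDualPair B H z zd y yd)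
    (hB : B.IsSymm) {π : M →ₗ[R] M} (hπH : ∀ v ∈ H, π v = 0)
    (hπP : ∀ v ∈ B.orthogonal H, π v = v) (w : M) : ∑ a, B w (z a) • zd a + π w = w := by
  cases nonempty_fintype I
  have hπ : π w = ∑ i, B w (y i) • yd i := by
    conv_lhs => rw [← h.sum_add_sum hB w]
    simp [hπH _ (h.left_dual_mem _), hπP _ (h.right_dual_mem _)]
  rw [hπ, h.sum_add_sum hB]

end IsAdaptedDualPair

lemma lieInvariant_of_apply_lie_s11 {R L : Type*} [CommRing R] [LieRing L] [LieAlgebra R L]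
    {B : LinearMap.BilinForm R L} (hinv : ∀ u v w : L, B ⁅u, v⁆ w = B u ⁅v, w⁆) :
    B.lieInvariant L := fun u v w ↦ by
  rw [← lie_skew, map_neg, LinearMap.neg_apply, hinv]

lemma lie_mem_orthogonal_s11 {R L : Type*} [CommRing R] [LieRing L] [LieAlgebra R L]
    {B : LinearMap.BilinForm R L} (hinv : B.lieInvariant L) {H : LieSubalgebra R L} {v w : L}
    (hv : v ∈ H) (hw : w ∈ B.orthogonal H.toSubmodule) :
    ⁅v, w⁆ ∈ B.orthogonal H.toSubmodule :=
  LieSubmodule.lie_mem (x := (⟨v, hv⟩ : H)) (m := w)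
    (LieAlgebra.InvariantForm.orthogonal (L := H) B (fun u ↦ hinv u) H.toLieSubmodule) hw

lemma isOrtho_of_apply_eq_zero {R M : Type*} [CommRing R] [AddCommGroup M] [Module R M]
    {B : LinearMap.BilinForm R M} (hB : B.IsSymm) {Q : QuadraticForm R M}
    (hQ : ∀ v, Q v = B v v) {v w : M} (h : B v w = 0) : Q.IsOrtho v w := by
  simp [QuadraticMap.isOrtho_def, hQ, h, hB.eq w v]

lemma ι_mul_ι_mul_ι_rotate_of_isOrtho {R M : Type*} [CommRing R] [AddCommGroup M] [Module R M]
    {Q : QuadraticForm R M} {u v w : M} (huw : Q.IsOrtho u w) (hvw : Q.IsOrtho v w) :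
    ι Q u * ι Q v * ι Q w = ι Q w * ι Q u * ι Q v := by
  rw [mul_ι_mul_ι_of_isOrtho _ hvw, ι_mul_ι_comm_of_isOrtho huw, neg_mul, neg_neg]

lemma IsAdaptedDualPair.sum_ι_mul_ι_mul_smul_ι {R M A I : Type*} [CommRing R] [AddCommGroup M]
    [Module R M] [Finite A] [DecidableEq A] [Fintype I] [DecidableEq I]
    {B : LinearMap.BilinForm R M} {H : Submodule R M} {z zd : A → M} {y yd : I → M}
    (h : IsAdaptedDualPair B H z zd y yd) (hB : B.IsSymm) {Q : QuadraticForm R M}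
    (hQ : ∀ v, Q v = B v v) (a : A) {v w : M} (hv : v ∈ B.orthogonal H)
    (hw : w ∈ B.orthogonal H) :
    ∑ j, ι Q v * ι Q (yd j) * (B w (y j) • ι Q (zd a)) = ι Q (zd a) * ι Q v * ι Q w := by
  have hortho {u : M} (hu : u ∈ B.orthogonal H) : Q.IsOrtho u (zd a) :=
    (isOrtho_of_apply_eq_zero hB hQ (hu _ (h.left_dual_mem a))).symm
  calc ∑ j, ι Q v * ι Q (yd j) * (B w (y j) • ι Q (zd a))
      = ι Q v * ι Q (∑ j, B w (y j) • yd j) * ι Q (zd a) := by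
        simp only [map_sum, map_smul, Finset.mul_sum, Finset.sum_mul, mul_smul_comm,
          smul_mul_assoc]
    _ = ι Q (zd a) * ι Q v * ι Q w := by
        rw [h.sum_right_of_mem_orthogonal hB hw,
          ι_mul_ι_mul_ι_rotate_of_isOrtho (hortho hv) (hortho hw)]

section Cubic

variable {k g A I : Type*} [CommRing k] [LieRing g] [LieAlgebra k g] [Fintype A] [Fintype I]

/-- The cubic element `∑ x*_a y*_i π([x_a, y_i])` of the Clifford algebra, where `xd`, `yd` are the
dual families `x*`, `y*` and `π` is the identity or the projection to a complement. Kostant's `γ` is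
`-1/24` times the case `x = y`. -/
def cubicSum (Q : QuadraticForm k g) (π : g → g) (x xd : A → g) (y yd : I → g) :
    CliffordAlgebra Q :=
  ∑ a, ∑ i, ι Q (xd a) * ι Q (yd i) * ι Q (π ⁅x a, y i⁆)

/-- The element `c ∑ y*_i π([X, y_i])` of the Clifford algebra, with `yd` the dual family `y*`. For
`c = -1/4` it is the spin action `ads_𝔭(X)` if `y` is a basis of `𝔭` and `π` the projection to
`𝔭`. -/
def spinAction (Q : QuadraticForm k g) (c : k) (π : g → g) (y yd : I → g) (X : g) :
    CliffordAlgebra Q :=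
  c • ∑ i, ι Q (yd i) * ι Q (π ⁅X, y i⁆)

lemma sum_ι_mul_spinAction (Q : QuadraticForm k g) (c : k) (π : g → g) (x xd : A → g)
    (y yd : I → g) :
    ∑ a, ι Q (xd a) * spinAction Q c π y yd (x a) = c • cubicSum Q π x xd y yd := by
  simp only [cubicSum, spinAction, mul_smul_comm, Finset.mul_sum, Finset.smul_sum, mul_assoc]

lemma cubicSum_sumElim (Q : QuadraticForm k g) (π : g → g) (x xd : A → g) (y yd : I → g) :
    cubicSum Q π (Sum.elim x y) (Sum.elim xd yd) (Sum.elim x y) (Sum.elim xd yd) =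
      cubicSum Q π x xd x xd + cubicSum Q π x xd y yd + cubicSum Q π y yd x xd +
        cubicSum Q π y yd y yd := by
  simp only [cubicSum, Fintype.sum_sum_type, Sum.elim_inl, Sum.elim_inr, Finset.sum_add_distrib]
  abel

lemma cubicSum_comm_of_isOrtho {Q : QuadraticForm k g} (x : A → g) {xd : A → g} (y : I → g)
    {yd : I → g} (h : ∀ a i, Q.IsOrtho (xd a) (yd i)) :
    cubicSum Q id y yd x xd = cubicSum Q id x xd y yd := by
  rw [cubicSum, Finset.sum_comm, cubicSum]
  refine Finset.sum_congr rfl fun a _ ↦ Finset.sum_congr rfl fun i _ ↦ ?_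
  rw [ι_mul_ι_comm_of_isOrtho (h a i).symm, ← lie_skew, id_eq, id_eq, map_neg, neg_mul_neg]

lemma cubicSum_proj_of_mem_orthogonal (Q : QuadraticForm k g) {B : LinearMap.BilinForm k g}
    (hinv : B.lieInvariant g) {H : LieSubalgebra k g} {π : g → g}
    (hπP : ∀ v ∈ B.orthogonal H.toSubmodule, π v = v) {z : A → g} (hz : ∀ a, z a ∈ H)
    (zd : A → g) {y : I → g} (hy : ∀ i, y i ∈ B.orthogonal H.toSubmodule) (yd : I → g) :
    cubicSum Q π z zd y yd = cubicSum Q id z zd y yd := by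
  simp only [cubicSum, id_eq, hπP _ (lie_mem_orthogonal_s11 hinv (hz _) (hy _))]

variable [DecidableEq A] [DecidableEq I] {B : LinearMap.BilinForm k g} {H : LieSubalgebra k g}
  {z zd : A → g} {y yd : I → g} {Q : QuadraticForm k g} {π : g →ₗ[k] g}

lemma cubicSum_right_right (h : IsAdaptedDualPair B H.toSubmodule z zd y yd) (hB : B.IsSymm)
    (hinv : B.lieInvariant g) (hQ : ∀ v, Q v = B v v) (hπH : ∀ v ∈ H, π v = 0)
    (hπP : ∀ v ∈ B.orthogonal H.toSubmodule, π v = v) :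
    cubicSum Q id y yd y yd = cubicSum Q id z zd y yd + cubicSum Q π y yd y yd := by
  have hlie (i j : I) :
      ⁅y i, y j⁆ = ∑ a, B ⁅z a, y i⁆ (y j) • zd a + π ⁅y i, y j⁆ := by
    have hcoeff (a : A) : B ⁅z a, y i⁆ (y j) = B ⁅y i, y j⁆ (z a) := by
      rw [← lie_skew, map_neg, LinearMap.neg_apply, hinv, neg_neg, hB.eq]
    simp only [hcoeff, h.sum_left_add_proj hB hπH hπP]
  have hblock : ∑ i, ∑ j, ι Q (yd i) * ι Q (yd j) * ι Q (∑ a, B ⁅z a, y i⁆ (y j) • zd a) =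
      cubicSum Q id z zd y yd := by
    rw [cubicSum, Finset.sum_comm (s := (Finset.univ : Finset A))]
    refine Finset.sum_congr rfl fun i _ ↦ ?_
    simp only [map_sum, map_smul, Finset.mul_sum]
    rw [Finset.sum_comm]
    exact Finset.sum_congr rfl fun a _ ↦ h.sum_ι_mul_ι_mul_smul_ι hB hQ a (h.right_dual_mem i)
      (lie_mem_orthogonal_s11 hinv (h.left_mem a) (h.right_mem i))
  rw [← hblock, cubicSum, cubicSum]
  simp only [← Finset.sum_add_distrib]
  refine Finset.sum_congr rfl fun i _ ↦ Finset.sum_congr rfl fun j _ ↦ ?_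
  rw [← mul_add, ← map_add, ← hlie, id_eq]

lemma cubicSum_decomposition (h : IsAdaptedDualPair B H.toSubmodule z zd y yd) (hB : B.IsSymm)
    (hinv : B.lieInvariant g) (hQ : ∀ v, Q v = B v v) (hπH : ∀ v ∈ H, π v = 0)
    (hπP : ∀ v ∈ B.orthogonal H.toSubmodule, π v = v) :
    cubicSum Q id (Sum.elim z y) (Sum.elim zd yd) (Sum.elim z y) (Sum.elim zd yd) =
      cubicSum Q id z zd z zd + (3 : k) • cubicSum Q π z zd y yd + cubicSum Q π y yd y yd := by
  have hortho (a : A) (i : I) : Q.IsOrtho (zd a) (yd i) :=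
    isOrtho_of_apply_eq_zero hB hQ (h.right_dual_mem i _ (h.left_dual_mem a))
  rw [cubicSum_sumElim, cubicSum_comm_of_isOrtho z y hortho,
    cubicSum_right_right h hB hinv hQ hπH hπP,
    cubicSum_proj_of_mem_orthogonal Q hinv hπP h.left_mem zd h.right_mem yd]
  module

end Cubic

section Dirac

variable {k g A I : Type*} [CommRing k] [LieRing g] [LieAlgebra k g] [Fintype A] [Fintype I]

/-- The Dirac operator `∑ x_u ⊗ x*_u + 1 ⊗ 2c ∑ x*_u x*_v π([x_u, x_v])`, with a free coefficient
`c` in place of the `-1/24` of `γ`. It covers both the cubic Dirac operator of a Lie algebra, where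
`π` is the identity, and Kostant's relative one, where `π` is the projection to the complement of a
subalgebra. -/
noncomputable def cubicDirac (Q : QuadraticForm k g) (c : k) (π : g → g) (x xd : A → g) :
    UniversalEnvelopingAlgebra k g ⊗[k] CliffordAlgebra Q :=
  ∑ u, UniversalEnvelopingAlgebra.ι k (x u) ⊗ₜ ι Q (xd u) +
    1 ⊗ₜ ((2 : k) • c • cubicSum Q π x xd x xd)

lemma cubicDirac_sumElim (Q : QuadraticForm k g) (c : k) (π : g → g) (x xd : A → g)
    (y yd : I → g) :
    cubicDirac Q c π (Sum.elim x y) (Sum.elim xd yd) =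
      ∑ a, UniversalEnvelopingAlgebra.ι k (x a) ⊗ₜ ι Q (xd a) +
        ∑ i, UniversalEnvelopingAlgebra.ι k (y i) ⊗ₜ ι Q (yd i) +
        1 ⊗ₜ ((2 : k) • c •
          cubicSum Q π (Sum.elim x y) (Sum.elim xd yd) (Sum.elim x y) (Sum.elim xd yd)) := by
  simp only [cubicDirac, Fintype.sum_sum_type, Sum.elim_inl, Sum.elim_inr]

/-- The Dirac operator of the subalgebra with dual families `z`, `zd`, twisted by its spin action on
the complement with dual families `y`, `yd`. The coefficient `6 * c` of the spin action is `-1/4`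
when `c` is the coefficient `-1/24` of `γ`. -/
noncomputable def twistedDirac (Q : QuadraticForm k g) (c : k) (π : g → g) (z zd : A → g)
    (y yd : I → g) : UniversalEnvelopingAlgebra k g ⊗[k] CliffordAlgebra Q :=
  ∑ a, UniversalEnvelopingAlgebra.ι k (z a) ⊗ₜ ι Q (zd a) +
    ∑ a, 1 ⊗ₜ (ι Q (zd a) * spinAction Q (6 * c) π y yd (z a)) +
    1 ⊗ₜ ((2 : k) • c • cubicSum Q id z zd z zd)

theorem dirac_decomposition_general [DecidableEq A] [DecidableEq I]
    {B : LinearMap.BilinForm k g} {H : LieSubalgebra k g} {z zd : A → g} {y yd : I → g}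
    (h : IsAdaptedDualPair B H.toSubmodule z zd y yd) (hB : B.IsSymm) (hinv : B.lieInvariant g)
    {Q : QuadraticForm k g} (hQ : ∀ v, Q v = B v v) {π : g →ₗ[k] g} (hπH : ∀ v ∈ H, π v = 0)
    (hπP : ∀ v ∈ B.orthogonal H.toSubmodule, π v = v) (c : k) :
    cubicDirac Q c id (Sum.elim z y) (Sum.elim zd yd) =
      twistedDirac Q c π z zd y yd + cubicDirac Q c π y yd := by
  have hcubic :
      (2 : k) • c •
          cubicSum Q id (Sum.elim z y) (Sum.elim zd yd) (Sum.elim z y) (Sum.elim zd yd) =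
        ∑ a, ι Q (zd a) * spinAction Q (6 * c) π y yd (z a) +
          (2 : k) • c • cubicSum Q id z zd z zd + (2 : k) • c • cubicSum Q π y yd y yd := by
    rw [cubicSum_decomposition h hB hinv hQ hπH hπP, sum_ι_mul_spinAction]
    module
  rw [cubicDirac_sumElim, hcubic, twistedDirac, cubicDirac, tmul_add, tmul_add, tmul_sum]
  abel

end Dirac

/-- Decomposition of the cubic Dirac operator: in `A = U(𝔤) ⊗ Cl(𝔤)` the universal cubic
Dirac operator of `𝔤` splits as `D_𝔤 = D'_𝔥 + D_{𝔤/𝔥}`, where `D'_𝔥` is the twisted Dirac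
operator on `𝔥` and `D_{𝔤/𝔥}` is Kostant's cubic Dirac operator. -/
theorem dirac_decomposition
    {k : Type*} [Field k] [CharZero k]
    {g : Type*} [LieRing g] [LieAlgebra k g]
    (B : LinearMap.BilinForm k g)
    (hsymm : ∀ X Y : g, B X Y = B Y X)
    (hnondeg : B.Nondegenerate)
    (hinv : ∀ X Y Z : g, B ⁅X, Y⁆ Z = B X ⁅Y, Z⁆)
    (H : LieSubalgebra k g) (P : Submodule k g)
    (hHnd : ∀ Z ∈ H, (∀ W ∈ H, B Z W = 0) → Z = 0)
    (hP : P = B.orthogonal H.toSubmodule)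
    (hcompl : IsCompl H.toSubmodule P)
    (pp : g →ₗ[k] g)
    (hpp_mem : ∀ X : g, pp X ∈ P)
    (hpp_P : ∀ Y ∈ P, pp Y = Y)
    (hpp_H : ∀ Z ∈ H, pp Z = 0)
    {A' : Type*} [Fintype A'] [DecidableEq A']
    (bh : A' → g) (hbh : ∀ a, bh a ∈ H)
    (bhd : A' → g) (hbhd : ∀ a, bhd a ∈ H)
    (hdualh : ∀ a c, B (bhd a) (bh c) = if a = c then 1 else 0)
    {I : Type*} [Fintype I] [DecidableEq I]
    (bp : I → g) (hbp : ∀ i, bp i ∈ P)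
    (bpd : I → g) (hbpd : ∀ i, bpd i ∈ P)
    (hdualp : ∀ i j, B (bpd i) (bp j) = if i = j then 1 else 0)
    (hindep : LinearIndependent k (Sum.elim bh bp))
    (hspan : Submodule.span k (Set.range (Sum.elim bh bp)) = ⊤)
    (Q : QuadraticForm k g) (hQ : ∀ X : g, Q X = B X X)
    (adsp : g → CliffordAlgebra Q)
    (hadsp : ∀ X : g, adsp X = (-(1/4 : k)) • ∑ i, ι Q (bpd i) * ι Q (pp ⁅X, bp i⁆))
    (γg γh γp : CliffordAlgebra Q)
    (hγg : γg = (-(1/24 : k)) • ∑ u : A' ⊕ I, ∑ v : A' ⊕ I,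
        ι Q (Sum.elim bhd bpd u) * ι Q (Sum.elim bhd bpd v)
          * ι Q ⁅Sum.elim bh bp u, Sum.elim bh bp v⁆)
    (hγh : γh = (-(1/24 : k)) • ∑ a, ∑ c,
        ι Q (bhd a) * ι Q (bhd c) * ι Q ⁅bh a, bh c⁆)
    (hγp : γp = (-(1/24 : k)) • ∑ i, ∑ j,
        ι Q (bpd i) * ι Q (bpd j) * ι Q (pp ⁅bp i, bp j⁆))
    (Dg Dh' Dgh : UniversalEnvelopingAlgebra k g ⊗[k] CliffordAlgebra Q)
    (hDg : Dg = (∑ a, UniversalEnvelopingAlgebra.ι k (bh a) ⊗ₜ[k] ι Q (bhd a))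
              + (∑ i, UniversalEnvelopingAlgebra.ι k (bp i) ⊗ₜ[k] ι Q (bpd i))
              + (1 : UniversalEnvelopingAlgebra k g) ⊗ₜ[k] ((2 : k) • γg))
    (hDh' : Dh' = (∑ a, UniversalEnvelopingAlgebra.ι k (bh a) ⊗ₜ[k] ι Q (bhd a))
              + (∑ a, (1 : UniversalEnvelopingAlgebra k g) ⊗ₜ[k] (ι Q (bhd a) * adsp (bh a)))
              + (1 : UniversalEnvelopingAlgebra k g) ⊗ₜ[k] ((2 : k) • γh))
    (hDgh : Dgh = (∑ i, UniversalEnvelopingAlgebra.ι k (bp i) ⊗ₜ[k] ι Q (bpd i))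
              + (1 : UniversalEnvelopingAlgebra k g) ⊗ₜ[k] ((2 : k) • γp)) :
    Dg = Dh' + Dgh := by
  subst hP hγg hγh hγp hDg hDh' hDgh
  have hcoeff : 6 * -(1 / 24 : k) = -(1 / 4) := by norm_num
  obtain rfl : adsp = spinAction Q (6 * -(1 / 24)) pp bp bpd :=
    funext fun X ↦ by rw [hadsp, spinAction, hcoeff]
  exact (cubicDirac_sumElim Q _ id bh bhd bp bpd).symm.trans <|
    dirac_decomposition_general ⟨hbh, hbhd, hbp, hbpd, hdualh, hdualp, hspan⟩ ⟨hsymm⟩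
      (lieInvariant_of_apply_lie_s11 hinv) hQ hpp_H hpp_P (-(1 / 24))
end

section
/- Kostant's cubic Dirac operator D_{𝔤/𝔥} is basic with respect to 𝔥 in the contraction sense: for every Z ∈ 𝔥, (1 ⊗ ι(Z))·D_{𝔤/𝔥} + D_{𝔤/𝔥}·(1 ⊗ ι(Z)) = 0 in A = U(𝔤) ⊗ Cl(𝔤). -/
open CliffordAlgebra TensorProduct

/-!
Since `𝔭` is orthogonal to `𝔥`, `ι Z` anticommutes with `ι Y` for all `Z ∈ 𝔥` and `Y ∈ 𝔭`, hence
with every product of an odd number of such `ι Y`. All Clifford factors of the Dirac operator are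
combinations of products of one or three of them, and `1 ⊗ ι Z` does not see the `U(𝔤)` factors.
-/

/-- The elements of an `R`-algebra that anticommute with a fixed element `a`, as the `R`-submodule
of solutions `x` of `a * x + x * a = 0`. With `a = 1 ⊗ ι Z` it consists of the elements of
`U(𝔤) ⊗ Cl(𝔤)` that are basic with respect to `Z`. -/
def anticentralizer (R : Type*) {A : Type*} [CommRing R] [Ring A] [Algebra R A] (a : A) :
    Submodule R A :=
  LinearMap.ker (LinearMap.mulLeft R a + LinearMap.mulRight R a)

namespace anticentralizer

variable {R A : Type*} [CommRing R] [Ring A] [Algebra R A]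

theorem mem_iff {a x : A} : x ∈ anticentralizer R a ↔ a * x + x * a = 0 :=
  Iff.rfl

theorem commute_mul {a x y : A} (hx : x ∈ anticentralizer R a) (hy : y ∈ anticentralizer R a) :
    Commute a (x * y) := by
  rw [mem_iff] at hx hy
  calc a * (x * y) = -(x * a) * y := by rw [← mul_assoc, eq_neg_of_add_eq_zero_left hx]
    _ = x * -(a * y) := by rw [neg_mul, mul_neg, mul_assoc]
    _ = x * y * a := by rw [neg_eq_of_add_eq_zero_right hy, mul_assoc]

theorem mul_mem_of_commute {a x y : A} (hx : Commute a x) (hy : y ∈ anticentralizer R a) :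
    x * y ∈ anticentralizer R a := by
  rw [mem_iff] at hy ⊢
  rw [← mul_assoc, hx.eq, mul_assoc, mul_assoc, ← mul_add, hy, mul_zero]

theorem mul_mul_mem {a x y z : A} (hx : x ∈ anticentralizer R a) (hy : y ∈ anticentralizer R a)
    (hz : z ∈ anticentralizer R a) : x * y * z ∈ anticentralizer R a :=
  mul_mem_of_commute (commute_mul hx hy) hz

theorem tmul_mem {U : Type*} [Ring U] [Algebra R U] {b u : U} {a x : A} (hu : Commute b u)
    (hx : x ∈ anticentralizer R a) : u ⊗ₜ[R] x ∈ anticentralizer R (b ⊗ₜ[R] a) := by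
  rw [mem_iff] at hx ⊢
  rw [Algebra.TensorProduct.tmul_mul_tmul, Algebra.TensorProduct.tmul_mul_tmul, hu.eq,
    ← TensorProduct.tmul_add, hx, TensorProduct.tmul_zero]

theorem ι_mem {M : Type*} [AddCommGroup M] [Module R M] {Q : QuadraticForm R M} {m n : M}
    (h : Q.IsOrtho m n) : ι Q n ∈ anticentralizer R (ι Q m) :=
  ι_mul_ι_add_swap_of_isOrtho h

end anticentralizer

theorem kostant_dirac_basic_general {R L : Type*} [CommRing R] [LieRing L] [LieAlgebra R L]
    (Q : QuadraticForm R L) {P : Submodule R L} {pp : L → L} (hpp_mem : ∀ X, pp X ∈ P)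
    {I : Type*} [Fintype I] {bp bpd : I → L} (hbpd : ∀ i, bpd i ∈ P) {c : R}
    {γp : CliffordAlgebra Q}
    (hγp : γp = c • ∑ i, ∑ j, ι Q (bpd i) * ι Q (bpd j) * ι Q (pp ⁅bp i, bp j⁆))
    {Dgh : UniversalEnvelopingAlgebra R L ⊗[R] CliffordAlgebra Q}
    (hDgh : Dgh = (∑ i, UniversalEnvelopingAlgebra.ι R (bp i) ⊗ₜ[R] ι Q (bpd i))
              + (1 : UniversalEnvelopingAlgebra R L) ⊗ₜ[R] ((2 : R) • γp))
    {Z : L} (hZ : ∀ Y ∈ P, Q.IsOrtho Z Y) :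
    ((1 : UniversalEnvelopingAlgebra R L) ⊗ₜ[R] ι Q Z) * Dgh
      + Dgh * ((1 : UniversalEnvelopingAlgebra R L) ⊗ₜ[R] ι Q Z) = 0 := by
  have ι_mem : ∀ Y ∈ P, ι Q Y ∈ anticentralizer R (ι Q Z) := fun Y hY =>
    anticentralizer.ι_mem (hZ Y hY)
  have γp_mem : γp ∈ anticentralizer R (ι Q Z) := by
    rw [hγp]
    exact Submodule.smul_mem _ c <| Submodule.sum_mem _ fun i _ => Submodule.sum_mem _ fun j _ =>
      anticentralizer.mul_mul_mem (ι_mem _ (hbpd i)) (ι_mem _ (hbpd j)) (ι_mem _ (hpp_mem _))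
  rw [← anticentralizer.mem_iff (R := R), hDgh]
  exact Submodule.add_mem _
    (Submodule.sum_mem _ fun i _ =>
      anticentralizer.tmul_mem (Commute.one_left _) (ι_mem _ (hbpd i)))
    (anticentralizer.tmul_mem (Commute.one_left _) (Submodule.smul_mem _ 2 γp_mem))

/-- Kostant's cubic Dirac operator `D_{𝔤/𝔥} = Σᵢ ιU(Yᵢ) ⊗ ι(Y*ᵢ) + 1 ⊗ 2γ_𝔭` is basic with
respect to `𝔥` in the contraction sense: for every `Z ∈ 𝔥`,
`(1 ⊗ ι Z) · D_{𝔤/𝔥} + D_{𝔤/𝔥} · (1 ⊗ ι Z) = 0` in `A = U(𝔤) ⊗ Cl(𝔤)`. -/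
theorem kostant_dirac_basic
    {k : Type*} [Field k] [CharZero k]
    {g : Type*} [LieRing g] [LieAlgebra k g]
    (B : LinearMap.BilinForm k g)
    (hsymm : ∀ X Y : g, B X Y = B Y X)
    (hnondeg : B.Nondegenerate)
    (hinv : ∀ X Y Z : g, B ⁅X, Y⁆ Z = B X ⁅Y, Z⁆)
    (H : LieSubalgebra k g) (P : Submodule k g)
    (hHnd : ∀ Z ∈ H, (∀ W ∈ H, B Z W = 0) → Z = 0)
    (hP : P = B.orthogonal H.toSubmodule)
    (hcompl : IsCompl H.toSubmodule P)
    (pp : g →ₗ[k] g)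
    (hpp_mem : ∀ X : g, pp X ∈ P)
    (hpp_P : ∀ Y ∈ P, pp Y = Y)
    (hpp_H : ∀ Z ∈ H, pp Z = 0)
    {I : Type*} [Fintype I] [DecidableEq I]
    (bp : I → g) (hbp : ∀ i, bp i ∈ P)
    (bpd : I → g) (hbpd : ∀ i, bpd i ∈ P)
    (hbp_indep : LinearIndependent k bp)
    (hbp_span : Submodule.span k (Set.range bp) = P)
    (hdualp : ∀ i j, B (bpd i) (bp j) = if i = j then 1 else 0)
    (Q : QuadraticForm k g) (hQ : ∀ X : g, Q X = B X X)
    (γp : CliffordAlgebra Q)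
    (hγp : γp = (-(1/24 : k)) • ∑ i, ∑ j,
        ι Q (bpd i) * ι Q (bpd j) * ι Q (pp ⁅bp i, bp j⁆))
    (Dgh : UniversalEnvelopingAlgebra k g ⊗[k] CliffordAlgebra Q)
    (hDgh : Dgh = (∑ i, UniversalEnvelopingAlgebra.ι k (bp i) ⊗ₜ[k] ι Q (bpd i))
              + (1 : UniversalEnvelopingAlgebra k g) ⊗ₜ[k] ((2 : k) • γp)) :
    ∀ Z ∈ H,
      ((1 : UniversalEnvelopingAlgebra k g) ⊗ₜ[k] ι Q Z) * Dgh
        + Dgh * ((1 : UniversalEnvelopingAlgebra k g) ⊗ₜ[k] ι Q Z) = 0 := by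
  obtain rfl : Q = B.toQuadraticMap := QuadraticMap.ext hQ
  exact fun Z hZ => kostant_dirac_basic_general _ hpp_mem hbpd hγp hDgh fun Y hY =>
    (LinearMap.BilinForm.toQuadraticMap_isOrtho ⟨hsymm⟩).2 (hP.le hY Z hZ)
end

section
/- Square of Kostant's cubic Dirac operator: in A = U(𝔤) ⊗ Cl(𝔤) one has D_{𝔤/𝔥}² = D_𝔤² − (D'_𝔥)², and explicitly D_{𝔤/𝔥}² = (Σ_a ιU(Z*_a)·ιU(Z_a) + Σ_i ιU(Y*_i)·ιU(Y_i)) ⊗ 1 − Σ_a ρ'(Z*_a)·ρ'(Z_a) + (1/24)·(Σ_u tr_𝔤(ad(x*_u) ∘ ad(x_u)) − Σ_a tr_𝔥((ad(Z*_a) ∘ ad(Z_a))|_𝔥))·1, where (x_u) runs over the combined basis of 𝔤 with dual basis (x*_u), ρ'(Z) = ιU(Z) ⊗ 1 + 1 ⊗ ads_𝔭(Z) for Z ∈ 𝔥, and (ad(Z*_a) ∘ ad(Z_a))|_𝔥 denotes the restriction to 𝔥 of the composite adjoint operators (which preserves 𝔥). -/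
open CliffordAlgebra TensorProduct

/-!
Write `ρ'` for the diagonal action of `𝔥`. Decomposing the bracket of `𝔤` into its `𝔥`- and
`𝔭`-components splits `D_𝔤 = D_{𝔤/𝔥} + D'_𝔥`, where `D'_𝔥` has the shape of the cubic Dirac operator
of `𝔥` with `ρ'` in place of `Z ↦ ιU(Z) ⊗ 1`. The operator `D_{𝔤/𝔥}` commutes with `ρ'(𝔥)` and
anticommutes with `ι(𝔥)`, hence anticommutes with `D'_𝔥`, and the cross terms of `D_𝔤²` vanish.

Both `D_𝔤` and `D'_𝔥` are instances of one operator `∑ r(xᵤ) c(x*ᵤ) + 2γ`, where the Lie algebra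
map `r` commutes with the Clifford map `c`. Its square is the Casimir `∑ r(x*ᵤ) r(xᵤ)` plus a
scalar: the cross term of `γ` cancels the Lie bracket term of the linear part, and `γ²` is a
multiple of the trace of the Casimir operator because `γ` commutes with the spin action and its
anticommutator with `c(y)` is a multiple of the spin action of `y`.
-/

/-- A finite family `vec` spanning the symmetric bilinear space `(V, B)` together with a dual family
`dual`, in the sense of the completeness relation `∑ B(x*ᵤ, y) xᵤ = y`; linear independence is not
part of the notion. -/
structure DualFrame {k V : Type*} [CommRing k] [AddCommGroup V] [Module k V]
    (B : LinearMap.BilinForm k V) (κ : Type*) [Fintype κ] where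
  vec : κ → V
  dual : κ → V
  symm : B.IsSymm
  sum_dual_smul_vec (y : V) : ∑ u, B (dual u) y • vec u = y

/-- The linear map `c` satisfies the Clifford relations of the quadratic form `X ↦ B(X, X)`. -/
def IsCliffordMap {k V R : Type*} [CommRing k] [AddCommGroup V] [Module k V] [Ring R] [Algebra k R]
    (B : LinearMap.BilinForm k V) (c : V →ₗ[k] R) : Prop :=
  ∀ a b, c a * c b + c b * c a = (2 * B a b) • (1 : R)

namespace DualFrame

section Contraction

variable {k V κ M : Type*} [CommRing k] [AddCommGroup V] [Module k V] [Fintype κ]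
  [AddCommGroup M] [Module k M] {B : LinearMap.BilinForm k V}

/-- Families with `B(x*ᵤ, xᵥ) = δᵤᵥ` and `(xᵤ)` spanning form a dual frame. -/
def ofDualFamilies [DecidableEq κ] (hB : B.IsSymm) (x xd : κ → V)
    (hdual : ∀ u v, B (xd u) (x v) = if u = v then 1 else 0)
    (hspan : Submodule.span k (Set.range x) = ⊤) : DualFrame B κ where
  vec := x
  dual := xd
  symm := hB
  sum_dual_smul_vec y := by
    have hspan_mem : y ∈ Submodule.span k (Set.range x) := hspan ▸ Submodule.mem_top
    induction hspan_mem using Submodule.span_induction with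
    | mem y hy => obtain ⟨v, rfl⟩ := hy; simp [hdual]
    | zero => simp
    | add y z _ _ hy hz => simp only [map_add, add_smul, Finset.sum_add_distrib, hy, hz]
    | smul t y _ hy => simp only [map_smul, smul_eq_mul, mul_smul, ← Finset.smul_sum, hy]

variable (F : DualFrame B κ)

include F in
theorem eq_zero_of_forall_apply_eq_zero {d : V} (hd : ∀ y, B d y = 0) : d = 0 := by
  rw [← F.sum_dual_smul_vec d]
  simp [F.symm.eq _ d, hd]

theorem sum_vec_smul_dual (y : V) : ∑ u, B y (F.vec u) • F.dual u = y := by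
  refine sub_eq_zero.mp (F.eq_zero_of_forall_apply_eq_zero fun z => ?_)
  have expand := congrArg (B y) (F.sum_dual_smul_vec z)
  simp only [map_sum, map_smul, smul_eq_mul] at expand
  simp [← expand, mul_comm]

theorem sum_apply_adjoint (f : V →ₗ[k] V →ₗ[k] M) {T T' : Module.End k V}
    (h : LinearMap.IsAdjointPair B B T T') :
    ∑ u, f (T (F.dual u)) (F.vec u) = ∑ u, f (F.dual u) (T' (F.vec u)) := by
  have expand_left : ∀ u, f (T (F.dual u)) (F.vec u)
      = ∑ v, B (T (F.dual u)) (F.vec v) • f (F.dual v) (F.vec u) := fun u => by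
    conv_lhs => rw [← F.sum_vec_smul_dual (T (F.dual u))]
    simp
  have expand_right : ∀ v, f (F.dual v) (T' (F.vec v))
      = ∑ u, B (F.dual u) (T' (F.vec v)) • f (F.dual v) (F.vec u) := fun v => by
    conv_lhs => rw [← F.sum_dual_smul_vec (T' (F.vec v))]
    simp
  simp_rw [expand_left, expand_right, h _ _]
  exact Finset.sum_comm

theorem sum_apply_skewAdjoint (f : V →ₗ[k] V →ₗ[k] M) {T : Module.End k V}
    (h : B.IsSkewAdjoint T) :
    ∑ u, f (T (F.dual u)) (F.vec u) = -∑ u, f (F.dual u) (T (F.vec u)) :=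
  (F.sum_apply_adjoint f (T' := -T) h).trans (by simp)

theorem sum_apply_swap (f : V →ₗ[k] V →ₗ[k] M) :
    ∑ u, f (F.vec u) (F.dual u) = ∑ u, f (F.dual u) (F.vec u) := by
  have expand_left : ∀ u, f (F.vec u) (F.dual u)
      = ∑ v, B (F.vec u) (F.vec v) • f (F.dual v) (F.dual u) := fun u => by
    conv_lhs => rw [← F.sum_vec_smul_dual (F.vec u)]
    simp
  have expand_right : ∀ v, f (F.dual v) (F.vec v)
      = ∑ u, B (F.vec v) (F.vec u) • f (F.dual v) (F.dual u) := fun v => by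
    conv_lhs => rw [← F.sum_vec_smul_dual (F.vec v)]
    simp
  simp_rw [expand_left, expand_right]
  rw [Finset.sum_comm]
  simp_rw [F.symm.eq (F.vec _) (F.vec _)]

include F in
theorem moduleFinite : Module.Finite k V := by
  classical
  refine ⟨⟨Finset.univ.image F.vec, eq_top_iff.mpr fun y _ => ?_⟩⟩
  rw [← F.sum_dual_smul_vec y]
  exact Submodule.sum_mem _ fun u _ => Submodule.smul_mem _ _ (Submodule.subset_span (by simp))

theorem trace_eq_sum [Module.Free k V] (T : Module.End k V) :
    LinearMap.trace k V T = ∑ u, B (F.dual u) (T (F.vec u)) := by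
  have := F.moduleFinite
  have hT : T = ∑ u, (B (F.dual u)).smulRight (T (F.vec u)) := by
    ext y
    conv_lhs => rw [← F.sum_dual_smul_vec y]
    simp
  conv_lhs => rw [hT]
  simp [LinearMap.trace_smulRight]

end Contraction

section Clifford

attribute [local instance] LieRing.ofAssociativeRing

variable {k V κ R : Type*} [CommRing k] [AddCommGroup V] [Module k V] [Fintype κ]
  [Ring R] [Algebra k R] {B : LinearMap.BilinForm k V} (F : DualFrame B κ) (c : V →ₗ[k] R)

/-- The quadratic Clifford element `∑ c(x*ᵤ) c(T xᵤ)` attached to an endomorphism `T`. For `T`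
skew-adjoint, `-(1/4) • F.quad c T` is the image of `T` in the spin representation. -/
def quad : Module.End k V →ₗ[k] R where
  toFun T := ∑ u, c (F.dual u) * c (T (F.vec u))
  map_add' _ _ := by simp [mul_add, Finset.sum_add_distrib]
  map_smul' _ _ := by simp [Finset.smul_sum]

/-- The cubic Clifford element `∑ c(x*ᵤ) c(x*ᵥ) c(m(xᵤ, xᵥ))` attached to a bilinear product `m`. -/
def cubic : (V →ₗ[k] Module.End k V) →ₗ[k] R where
  toFun m := ∑ u, c (F.dual u) * F.quad c (m (F.vec u))
  map_add' _ _ := by simp [mul_add, Finset.sum_add_distrib]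
  map_smul' _ _ := by simp [Finset.smul_sum]

/-- Twelve times the cubic Dirac operator: for a product `m` that is a Lie bracket or its projection
to `𝔭`, `F.dirac c r m` is `12 • (∑ r(xᵤ) c(x*ᵤ) + 2 γ)`. The factor avoids denominators. -/
def dirac (r : V →ₗ[k] R) (m : V →ₗ[k] Module.End k V) : R :=
  (12 : k) • ∑ u, r (F.vec u) * c (F.dual u) - F.cubic c m

theorem quad_apply (T : Module.End k V) :
    F.quad c T = ∑ u, c (F.dual u) * c (T (F.vec u)) := rfl

theorem cubic_apply (m : V →ₗ[k] Module.End k V) :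
    F.cubic c m = ∑ u, c (F.dual u) * F.quad c (m (F.vec u)) := rfl

variable {c}

theorem quad_eq_sum_vec_mul_adjoint {T T' : Module.End k V} (h : LinearMap.IsAdjointPair B B T T') :
    F.quad c T' = ∑ u, c (T (F.vec u)) * c (F.dual u) := by
  have hadj := F.sum_apply_adjoint ((LinearMap.mul k R).compl₁₂ c c) h
  have hswap := F.sum_apply_swap ((LinearMap.mul k R).compl₁₂ (c ∘ₗ T) c)
  simp only [LinearMap.compl₁₂_apply, LinearMap.mul_apply', LinearMap.comp_apply] at hadj hswap
  rw [quad_apply, ← hadj, hswap]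

theorem quad_add_quad_adjoint [Module.Free k V] (hc : IsCliffordMap B c) {T T' : Module.End k V}
    (h : LinearMap.IsAdjointPair B B T T') :
    F.quad c T + F.quad c T' = (2 * LinearMap.trace k V T) • (1 : R) := by
  rw [F.quad_eq_sum_vec_mul_adjoint h, quad_apply, ← Finset.sum_add_distrib]
  simp_rw [hc _ _]
  rw [← Finset.sum_smul, ← Finset.mul_sum, F.trace_eq_sum]

theorem lie_quad_vec (hc : IsCliffordMap B c) {T : Module.End k V} (hT : B.IsSkewAdjoint T)
    (y : V) : ⁅F.quad c T, c y⁆ = (-4 : k) • c (T y) := by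
  have lie_mul_vec : ∀ a b, ⁅c a * c b, c y⁆ = (2 * B b y) • c a - (2 * B a y) • c b := by
    intro a b
    have hb := congrArg (c a * ·) (hc b y)
    have ha := congrArg (· * c b) (hc a y)
    simp only [mul_add, add_mul, mul_smul_comm, smul_mul_assoc, mul_one, one_mul] at ha hb
    rw [← ha, ← hb, Ring.lie_def]
    noncomm_ring
  have sum_left : ∑ u, B (T (F.vec u)) y • c (F.dual u) = -c (T y) := by
    conv_rhs => rw [← F.sum_vec_smul_dual (T y)]
    simp [hT _ _, F.symm.eq _ (T y)]
  have sum_right : ∑ u, B (F.dual u) y • c (T (F.vec u)) = c (T y) := by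
    conv_rhs => rw [← F.sum_dual_smul_vec y]
    simp
  rw [quad_apply, sum_lie]
  simp_rw [lie_mul_vec, mul_smul]
  rw [Finset.sum_sub_distrib, ← Finset.smul_sum, ← Finset.smul_sum, sum_left, sum_right]
  module

theorem lie_quad {s : R} {T : Module.End k V} (hT : B.IsSkewAdjoint T)
    (hs : ∀ y, ⁅s, c y⁆ = c (T y)) (S : Module.End k V) : ⁅s, F.quad c S⁆ = F.quad c ⁅T, S⁆ := by
  have hskew := F.sum_apply_skewAdjoint ((LinearMap.mul k R).compl₁₂ c (c ∘ₗ S)) hT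
  simp only [LinearMap.compl₁₂_apply, LinearMap.mul_apply', LinearMap.comp_apply] at hskew
  have leibniz : ∀ a b, ⁅s, c a * c b⁆ = c (T a) * c b + c a * c (T b) := fun a b => by
    rw [← hs, ← hs, Ring.lie_def, Ring.lie_def, Ring.lie_def]
    noncomm_ring
  rw [quad_apply, lie_sum]
  simp_rw [leibniz]
  rw [Finset.sum_add_distrib, hskew, Ring.lie_def, map_sub, quad_apply, quad_apply]
  simp only [Module.End.mul_apply]
  abel

theorem lie_cubic_eq_zero {s : R} {T : Module.End k V} (hT : B.IsSkewAdjoint T)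
    (hs : ∀ y, ⁅s, c y⁆ = c (T y)) {m : V →ₗ[k] Module.End k V}
    (hm : ∀ a, ⁅T, m a⁆ = m (T a)) : ⁅s, F.cubic c m⁆ = 0 := by
  have hskew := F.sum_apply_skewAdjoint ((LinearMap.mul k R).compl₁₂ c (F.quad c ∘ₗ m)) hT
  simp only [LinearMap.compl₁₂_apply, LinearMap.mul_apply', LinearMap.comp_apply] at hskew
  have leibniz : ∀ a b, ⁅s, c a * F.quad c (m b)⁆
      = c (T a) * F.quad c (m b) + c a * F.quad c (m (T b)) := fun a b => by
    rw [← hm, ← F.lie_quad hT hs, ← hs, Ring.lie_def, Ring.lie_def, Ring.lie_def]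
    noncomm_ring
  rw [cubic_apply, lie_sum]
  simp_rw [leibniz]
  rw [Finset.sum_add_distrib, hskew, neg_add_cancel]

theorem cubic_add_cubic_flip (hc : IsCliffordMap B c) (m : V →ₗ[k] Module.End k V) :
    F.cubic c m + F.cubic c m.flip = (2 : k) • ∑ u, c (m (F.vec u) (F.dual u)) := by
  have expand : ∀ u, ∑ v, B (F.dual u) (F.dual v) • c (m (F.vec u) (F.vec v))
      = c (m (F.vec u) (F.dual u)) := fun u => by
    conv_rhs => rw [← F.sum_dual_smul_vec (F.dual u)]
    simp [F.symm.eq (F.dual u)]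
  have hflip : F.cubic c m.flip
      = ∑ u, ∑ v, c (F.dual v) * c (F.dual u) * c (m (F.vec u) (F.vec v)) := by
    rw [Finset.sum_comm]
    simp only [cubic_apply, quad_apply, Finset.mul_sum, mul_assoc, LinearMap.flip_apply]
  rw [hflip, cubic_apply, ← Finset.sum_add_distrib, Finset.smul_sum]
  refine Finset.sum_congr rfl fun u _ => ?_
  simp_rw [quad_apply, Finset.mul_sum, ← mul_assoc]
  rw [← Finset.sum_add_distrib, ← expand, Finset.smul_sum]
  simp_rw [← add_mul, hc _ _, smul_one_mul, mul_smul]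

theorem cubic_anticomm_vec (hc : IsCliffordMap B c) {m : V →ₗ[k] Module.End k V}
    (hm : ∀ a, B.IsSkewAdjoint (m a)) (y : V) :
    F.cubic c m * c y + c y * F.cubic c m
      = (2 : k) • F.quad c (m y) - (4 : k) • F.quad c (m.flip y) := by
  have move : ∀ u, c (F.dual u) * F.quad c (m (F.vec u)) * c y
      + c y * (c (F.dual u) * F.quad c (m (F.vec u)))
      = (2 : k) • B (F.dual u) y • F.quad c (m (F.vec u))
        - (4 : k) • (c (F.dual u) * c (m (F.vec u) y)) := fun u => by
    have hlie := F.lie_quad_vec hc (hm (F.vec u)) y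
    rw [Ring.lie_def, sub_eq_iff_eq_add] at hlie
    have hcomm := congrArg (· * F.quad c (m (F.vec u))) (hc (F.dual u) y)
    simp only [mul_smul, smul_mul_assoc, one_mul] at hcomm
    rw [← hcomm, mul_assoc, hlie, mul_add, neg_smul, mul_neg, mul_smul_comm]
    noncomm_ring
  have sum_vec : ∑ u, B (F.dual u) y • F.quad c (m (F.vec u)) = F.quad c (m y) := by
    conv_rhs => rw [← F.sum_dual_smul_vec y]
    simp
  rw [cubic_apply, Finset.sum_mul, Finset.mul_sum, ← Finset.sum_add_distrib]
  simp_rw [move]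
  rw [Finset.sum_sub_distrib, ← Finset.smul_sum, ← Finset.smul_sum, sum_vec]
  rfl

end Clifford

section Dirac

attribute [local instance] LieRing.ofAssociativeRing

variable {k V κ R : Type*} [CommRing k] [AddCommGroup V] [Module k V] [Fintype κ]
  [Ring R] [Algebra k R] {B : LinearMap.BilinForm k V} (F : DualFrame B κ) {c r : V →ₗ[k] R}
  {m : V →ₗ[k] Module.End k V}

theorem commute_quad {s : R} (hs : ∀ y, Commute s (c y)) (T : Module.End k V) :
    Commute s (F.quad c T) :=
  Commute.sum_right _ _ _ fun _ _ => (hs _).mul_right (hs _)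

theorem commute_cubic {s : R} (hs : ∀ y, Commute s (c y)) (m : V →ₗ[k] Module.End k V) :
    Commute s (F.cubic c m) :=
  Commute.sum_right _ _ _ fun _ _ => (hs _).mul_right (F.commute_quad hs _)

theorem lie_dirac_eq_zero {s : R} {T : Module.End k V} (hT : B.IsSkewAdjoint T)
    (hsc : ∀ y, ⁅s, c y⁆ = c (T y)) (hsr : ∀ y, ⁅s, r y⁆ = r (T y))
    (hm : ∀ a, ⁅T, m a⁆ = m (T a)) : ⁅s, F.dirac c r m⁆ = 0 := by
  have hskew := F.sum_apply_skewAdjoint ((LinearMap.mul k R).compl₁₂ r c).flip hT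
  simp only [LinearMap.flip_apply, LinearMap.compl₁₂_apply, LinearMap.mul_apply'] at hskew
  have leibniz : ∀ a b, ⁅s, r a * c b⁆ = r (T a) * c b + r a * c (T b) := fun a b => by
    rw [← hsc, ← hsr, Ring.lie_def, Ring.lie_def, Ring.lie_def]
    noncomm_ring
  have lie_sum_eq_zero : ⁅s, ∑ u, r (F.vec u) * c (F.dual u)⁆ = 0 := by
    rw [lie_sum]
    simp_rw [leibniz]
    rw [Finset.sum_add_distrib, hskew, add_neg_cancel]
  rw [dirac, lie_sub, F.lie_cubic_eq_zero hT hsc hm, sub_zero, Ring.lie_def, mul_smul_comm,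
    smul_mul_assoc, ← smul_sub, ← Ring.lie_def, lie_sum_eq_zero, smul_zero]

theorem dirac_anticomm_vec (hc : IsCliffordMap B c) (hrc : ∀ a b, Commute (r a) (c b))
    (hm : ∀ a, B.IsSkewAdjoint (m a)) (y : V) :
    F.dirac c r m * c y + c y * F.dirac c r m
      = (24 : k) • r y - (2 : k) • F.quad c (m y) + (4 : k) • F.quad c (m.flip y) := by
  have move : ∀ u, r (F.vec u) * c (F.dual u) * c y + c y * (r (F.vec u) * c (F.dual u))
      = (2 : k) • B (F.dual u) y • r (F.vec u) := fun u => by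
    rw [← mul_assoc (c y), ← (hrc _ _).eq, mul_assoc, mul_assoc, ← mul_add, hc, mul_smul_comm,
      mul_one, mul_smul]
  have sum_vec : ∑ u, B (F.dual u) y • r (F.vec u) = r y := by
    conv_rhs => rw [← F.sum_dual_smul_vec y]
    simp
  have linear_part : (∑ u, r (F.vec u) * c (F.dual u)) * c y
      + c y * ∑ u, r (F.vec u) * c (F.dual u) = (2 : k) • r y := by
    rw [Finset.sum_mul, Finset.mul_sum, ← Finset.sum_add_distrib]
    simp_rw [move]
    rw [← Finset.smul_sum, sum_vec]
  have cubic_part := F.cubic_anticomm_vec hc hm y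
  simp only [dirac, sub_mul, mul_sub, smul_mul_assoc, mul_smul_comm]
  linear_combination (norm := module) (12 : k) • linear_part - cubic_part

theorem dirac_mul_eq_neg_mul_dirac {D : R} (hc : ∀ y, c y * D = -(D * c y))
    (hr : ∀ y, r y * D = D * r y) (m : V →ₗ[k] Module.End k V) :
    F.dirac c r m * D = -(D * F.dirac c r m) := by
  have quad_commute : ∀ T, F.quad c T * D = D * F.quad c T := fun T => by
    simp only [quad_apply, Finset.sum_mul, Finset.mul_sum, mul_assoc, hc, mul_neg]
    simp only [← mul_assoc, hc, neg_mul, neg_neg]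
  have linear_part : ∀ u, r (F.vec u) * c (F.dual u) * D = -(D * (r (F.vec u) * c (F.dual u))) :=
    fun u => by rw [mul_assoc, hc, mul_neg, ← mul_assoc, hr, mul_assoc]
  have cubic_part : ∀ u, c (F.dual u) * F.quad c (m (F.vec u)) * D
      = -(D * (c (F.dual u) * F.quad c (m (F.vec u)))) := fun u => by
    rw [mul_assoc, quad_commute, ← mul_assoc, hc, neg_mul, mul_assoc]
  simp only [dirac, cubic_apply, sub_mul, mul_sub, smul_mul_assoc, mul_smul_comm, Finset.sum_mul,
    Finset.mul_sum, linear_part, cubic_part, Finset.sum_neg_distrib, smul_neg, neg_sub_neg, neg_sub]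

end Dirac

section Lie

attribute [local instance] LieRing.ofAssociativeRing

variable {k L κ R : Type*} [Field k] [LieRing L] [LieAlgebra k L] [Fintype κ]
  [Ring R] [Algebra k R] {B : LinearMap.BilinForm k L} (F : DualFrame B κ) (c : L →ₗ[k] R)

/-- The Casimir operator `∑ ad x*ᵤ ∘ ad xᵤ` of the adjoint representation. -/
def adCasimir : Module.End k L :=
  ∑ u, LieAlgebra.ad k L (F.dual u) * LieAlgebra.ad k L (F.vec u)

/-- The quadratic Clifford element of `ad z`, which is `-4` times the image of `z` under the spin
representation. -/
def adQuad : L →ₗ[k] R := F.quad c ∘ₗ (LieAlgebra.ad k L).toLinearMap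

/-- The cubic Clifford element of the Lie bracket, which is `-24` times the element `γ` of the cubic
Dirac operator. -/
def adCubic : R := F.cubic c (LieAlgebra.ad k L).toLinearMap

/-- Twelve times the cubic Dirac operator `D_𝔤`. -/
def adDirac (r : L →ₗ[k] R) : R := F.dirac c r (LieAlgebra.ad k L).toLinearMap

theorem adCubic_eq_sum : F.adCubic c = ∑ u, c (F.dual u) * F.adQuad c (F.vec u) := rfl

variable {c}

theorem adCubic_eq_sum_sum :
    F.adCubic c = ∑ u, ∑ v, c (F.dual u) * c (F.dual v) * c ⁅F.vec u, F.vec v⁆ := by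
  simp only [mul_assoc, ← Finset.mul_sum]
  rfl

theorem lieInvariant_of_apply_lie (hB : ∀ x y z : L, B ⁅x, y⁆ z = B x ⁅y, z⁆) :
    B.lieInvariant L := fun x y z => by
  rw [← lie_skew, map_neg, LinearMap.neg_apply, hB]

theorem isSkewAdjoint_ad (hB : B.lieInvariant L) (z : L) :
    B.IsSkewAdjoint (LieAlgebra.ad k L z) := fun x y =>
  (hB z x y).trans (map_neg (B x) _).symm

theorem sum_dual_mul_lie (y : L) :
    ∑ u, c (F.dual u) * c ⁅F.vec u, y⁆ = -F.adQuad c y := by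
  simp_rw [← lie_skew _ y, map_neg, mul_neg, Finset.sum_neg_distrib]
  rfl

theorem lie_adQuad_vec (hB : B.lieInvariant L) (hc : IsCliffordMap B c) (z y : L) :
    ⁅F.adQuad c z, c y⁆ = (-4 : k) • c ⁅z, y⁆ :=
  F.lie_quad_vec hc (isSkewAdjoint_ad hB z) y

theorem lie_adQuad_adCubic (hB : B.lieInvariant L) (hc : IsCliffordMap B c) (z : L) :
    ⁅F.adQuad c z, F.adCubic c⁆ = 0 := by
  refine F.lie_cubic_eq_zero (isSkewAdjoint_ad hB ((-4 : k) • z)) (fun y => ?_) fun a => ?_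
  · simp [F.lie_adQuad_vec hB hc]
  · simp [← LieHom.map_lie]

theorem adCubic_anticomm_vec (hB : B.lieInvariant L) (hc : IsCliffordMap B c) (y : L) :
    F.adCubic c * c y + c y * F.adCubic c = (6 : k) • F.adQuad c y := by
  have ad_flip : (LieAlgebra.ad k L).toLinearMap.flip y = -LieAlgebra.ad k L y := by
    ext z; simp
  rw [adCubic, F.cubic_anticomm_vec hc (isSkewAdjoint_ad hB), ad_flip, map_neg]
  change (2 : k) • F.adQuad c y - (4 : k) • -F.adQuad c y = _
  module

theorem adCasimir_eq_sum_swap :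
    F.adCasimir = ∑ u, LieAlgebra.ad k L (F.vec u) * LieAlgebra.ad k L (F.dual u) :=
  (F.sum_apply_swap ((LinearMap.mul k (Module.End k L)).compl₁₂
    (LieAlgebra.ad k L).toLinearMap (LieAlgebra.ad k L).toLinearMap)).symm

theorem trace_adCasimir : LinearMap.trace k L F.adCasimir
    = ∑ u, LinearMap.trace k L (LieAlgebra.ad k L (F.dual u) ∘ₗ LieAlgebra.ad k L (F.vec u)) :=
  map_sum _ _ _

theorem isAdjointPair_adCasimir (hB : B.lieInvariant L) :
    LinearMap.IsAdjointPair B B F.adCasimir F.adCasimir := fun y z => by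
  conv_rhs => rw [adCasimir_eq_sum_swap]
  simp [adCasimir, hB _ _ _]

theorem sum_dual_mul_adQuad_lie (hB : B.lieInvariant L) (y : L) :
    ∑ u, c (F.dual u) * F.adQuad c ⁅F.vec u, y⁆ = -∑ u, c ⁅F.vec u, y⁆ * F.adQuad c (F.dual u) := by
  have hskew := F.sum_apply_skewAdjoint ((LinearMap.mul k R).compl₁₂ c (F.adQuad c))
    (isSkewAdjoint_ad hB y)
  have hswap := F.sum_apply_swap
    ((LinearMap.mul k R).compl₁₂ (c ∘ₗ LieAlgebra.ad k L y) (F.adQuad c))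
  simp only [LinearMap.compl₁₂_apply, LinearMap.mul_apply', LinearMap.comp_apply,
    LieAlgebra.ad_apply] at hskew hswap
  simp_rw [← lie_skew _ y, map_neg, mul_neg, neg_mul, Finset.sum_neg_distrib]
  rw [← hskew, hswap, neg_neg]

theorem quad_adCasimir [NeZero (2 : k)] (hB : B.lieInvariant L) (hc : IsCliffordMap B c) :
    F.quad c F.adCasimir = LinearMap.trace k L F.adCasimir • (1 : R) := by
  refine smul_right_injective R (two_ne_zero (α := k)) ?_
  simpa only [two_smul k (F.quad c _), smul_smul] using
    F.quad_add_quad_adjoint hc (F.isAdjointPair_adCasimir hB)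

theorem sum_lie_mul_lie (hB : B.lieInvariant L) :
    ∑ u, ∑ v, c ⁅F.dual u, F.dual v⁆ * c ⁅F.vec u, F.vec v⁆ = -F.quad c F.adCasimir := by
  have move : ∀ u, ∑ v, c ⁅F.dual u, F.dual v⁆ * c ⁅F.vec u, F.vec v⁆
      = -F.quad c (LieAlgebra.ad k L (F.vec u) * LieAlgebra.ad k L (F.dual u)) := fun u =>
    F.sum_apply_skewAdjoint ((LinearMap.mul k R).compl₁₂ c (c ∘ₗ LieAlgebra.ad k L (F.vec u)))
      (isSkewAdjoint_ad hB (F.dual u))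
  simp_rw [move, Finset.sum_neg_distrib, adCasimir_eq_sum_swap, map_sum]

theorem sum_mul_adCubic_anticomm (hB : B.lieInvariant L) (hc : IsCliffordMap B c)
    {r : L →ₗ[k] R} (hrc : ∀ a b, Commute (r a) (c b)) :
    (∑ u, r (F.vec u) * c (F.dual u)) * F.adCubic c + F.adCubic c * ∑ u, r (F.vec u) * c (F.dual u)
      = (6 : k) • ∑ u, r (F.vec u) * F.adQuad c (F.dual u) := by
  have commute : ∀ u, F.adCubic c * r (F.vec u) = r (F.vec u) * F.adCubic c := fun u =>
    (F.commute_cubic (hrc (F.vec u)) _).symm.eq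
  rw [Finset.sum_mul, Finset.mul_sum, ← Finset.sum_add_distrib, Finset.smul_sum]
  refine Finset.sum_congr rfl fun u _ => ?_
  rw [← mul_smul_comm, ← F.adCubic_anticomm_vec hB hc, mul_add, ← mul_assoc (F.adCubic c), commute]
  noncomm_ring

theorem sum_lie_mul_dual_mul_dual (hB : B.lieInvariant L) (r : L →ₗ[k] R) :
    ∑ u, ∑ v, r ⁅F.vec u, F.vec v⁆ * (c (F.dual u) * c (F.dual v))
      = ∑ v, r (F.vec v) * F.adQuad c (F.dual v) := by
  have move : ∀ u, ∑ v, r ⁅F.vec u, F.vec v⁆ * (c (F.dual u) * c (F.dual v))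
      = -∑ v, r (F.vec v) * (c (F.dual u) * c ⁅F.vec u, F.dual v⁆) := fun u => by
    rw [eq_neg_iff_add_eq_zero, add_comm, ← eq_neg_iff_add_eq_zero]
    exact F.sum_apply_skewAdjoint ((LinearMap.mul k R).compl₁₂ r
      (LinearMap.mulLeft k (c (F.dual u)) ∘ₗ c)).flip (isSkewAdjoint_ad hB (F.vec u))
  simp_rw [move, Finset.sum_neg_distrib]
  rw [Finset.sum_comm]
  simp only [← Finset.mul_sum, sum_dual_mul_lie, mul_neg, Finset.sum_neg_distrib, neg_neg]

theorem two_smul_sum_mul_self (hB : B.lieInvariant L) (hc : IsCliffordMap B c) {r : L →ₗ[k] R}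
    (hr : ∀ a b, r ⁅a, b⁆ = ⁅r a, r b⁆) (hrc : ∀ a b, Commute (r a) (c b)) :
    (2 : k) • ((∑ u, r (F.vec u) * c (F.dual u)) * ∑ u, r (F.vec u) * c (F.dual u))
      = (2 : k) • ∑ u, r (F.dual u) * r (F.vec u) + ∑ u, r (F.vec u) * F.adQuad c (F.dual u) := by
  have symmetrize : ∀ u v, r (F.vec u) * c (F.dual u) * (r (F.vec v) * c (F.dual v))
        + r (F.vec v) * c (F.dual v) * (r (F.vec u) * c (F.dual u))
      = (2 : k) • (r (B (F.dual u) (F.dual v) • F.vec u) * r (F.vec v))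
        + r ⁅F.vec v, F.vec u⁆ * (c (F.dual v) * c (F.dual u)) := fun u v => by
    rw [(hrc _ _).symm.mul_mul_mul_comm, (hrc _ _).symm.mul_mul_mul_comm,
      eq_sub_of_add_eq (hc (F.dual u) (F.dual v)), hr, Ring.lie_def, mul_sub,
      mul_smul_comm, mul_one, map_smul, smul_mul_assoc, mul_smul]
    noncomm_ring
  have contract : ∀ v, ∑ u, B (F.dual u) (F.dual v) • F.vec u = F.dual v := fun v =>
    F.sum_dual_smul_vec _
  rw [two_smul, Finset.sum_mul_sum]
  nth_rewrite 2 [Finset.sum_comm]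
  simp only [← Finset.sum_add_distrib, symmetrize]
  simp only [Finset.sum_add_distrib]
  rw [← F.sum_lie_mul_dual_mul_dual hB, Finset.sum_comm,
    Finset.sum_comm (f := fun u v => r ⁅F.vec v, F.vec u⁆ * _)]
  simp only [← Finset.smul_sum, ← Finset.sum_mul, ← map_sum, contract]

section Cancel

variable [NeZero (2 : k)] [NeZero (3 : k)]

theorem sum_adQuad_mul_lie (hB : B.lieInvariant L) (hc : IsCliffordMap B c) (y : L) :
    ∑ u, F.adQuad c (F.dual u) * c ⁅F.vec u, y⁆
      = ∑ u, c (F.dual u) * F.adQuad c ⁅F.vec u, y⁆ := by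
  have six_ne_zero : (6 : k) ≠ 0 := by
    rw [show (6 : k) = 2 * 3 by norm_num]
    exact mul_ne_zero two_ne_zero three_ne_zero
  have commute : F.adQuad c y * F.adCubic c = F.adCubic c * F.adQuad c y :=
    sub_eq_zero.mp (F.lie_adQuad_adCubic hB hc y)
  have expand_left : ∀ u, (6 : k) • (F.adQuad c (F.dual u) * c ⁅F.vec u, y⁆)
      = F.adCubic c * (c (F.dual u) * c ⁅F.vec u, y⁆)
        + c (F.dual u) * F.adCubic c * c ⁅F.vec u, y⁆ := fun u => by
    rw [← smul_mul_assoc, ← F.adCubic_anticomm_vec hB hc, add_mul, mul_assoc (F.adCubic c)]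
  have expand_right : ∀ u, (6 : k) • (c (F.dual u) * F.adQuad c ⁅F.vec u, y⁆)
      = c (F.dual u) * F.adCubic c * c ⁅F.vec u, y⁆
        + c (F.dual u) * c ⁅F.vec u, y⁆ * F.adCubic c := fun u => by
    rw [← mul_smul_comm, ← F.adCubic_anticomm_vec hB hc, mul_add, ← mul_assoc, ← mul_assoc]
  refine smul_right_injective R six_ne_zero ?_
  simp only [Finset.smul_sum, expand_left, expand_right, Finset.sum_add_distrib]
  rw [← Finset.mul_sum, ← Finset.sum_mul, sum_dual_mul_lie, mul_neg, neg_mul, commute, add_comm]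

theorem sum_adQuad_mul_lie_eq_adCasimir (hB : B.lieInvariant L) (hc : IsCliffordMap B c) (y : L) :
    ∑ u, F.adQuad c (F.dual u) * c ⁅F.vec u, y⁆ = (-2 : k) • c (F.adCasimir y) := by
  have anticomm : ∑ u, F.adQuad c (F.dual u) * c ⁅F.vec u, y⁆
      + ∑ u, c ⁅F.vec u, y⁆ * F.adQuad c (F.dual u) = 0 := by
    rw [F.sum_adQuad_mul_lie hB hc, F.sum_dual_mul_adQuad_lie hB, neg_add_cancel]
  have comm : ∑ u, F.adQuad c (F.dual u) * c ⁅F.vec u, y⁆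
      - ∑ u, c ⁅F.vec u, y⁆ * F.adQuad c (F.dual u) = (-4 : k) • c (F.adCasimir y) := by
    simp_rw [← Finset.sum_sub_distrib, ← Ring.lie_def, F.lie_adQuad_vec hB hc, adCasimir]
    simp [Finset.smul_sum]
  refine smul_right_injective R (two_ne_zero (α := k)) (?_ : (2 : k) • _ = (2 : k) • _)
  linear_combination (norm := module) anticomm + comm

theorem sum_adQuad_mul_adQuad (hB : B.lieInvariant L) (hc : IsCliffordMap B c) :
    ∑ u, F.adQuad c (F.dual u) * F.adQuad c (F.vec u)
      = (2 * LinearMap.trace k L F.adCasimir) • (1 : R) := by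
  have move : ∀ u v, F.adQuad c (F.dual u) * (c (F.dual v) * c ⁅F.vec u, F.vec v⁆)
      = c (F.dual v) * (F.adQuad c (F.dual u) * c ⁅F.vec u, F.vec v⁆)
        - (4 : k) • (c ⁅F.dual u, F.dual v⁆ * c ⁅F.vec u, F.vec v⁆) := fun u v => by
    have hlie := F.lie_adQuad_vec hB hc (F.dual u) (F.dual v)
    rw [Ring.lie_def, sub_eq_iff_eq_add] at hlie
    rw [← mul_assoc, hlie, neg_smul, add_mul, neg_mul, smul_mul_assoc]
    noncomm_ring
  calc ∑ u, F.adQuad c (F.dual u) * F.adQuad c (F.vec u)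
      = ∑ u, ∑ v, F.adQuad c (F.dual u) * (c (F.dual v) * c ⁅F.vec u, F.vec v⁆) := by
        simp only [← Finset.mul_sum]; rfl
    _ = ∑ v, c (F.dual v) * ∑ u, F.adQuad c (F.dual u) * c ⁅F.vec u, F.vec v⁆
        - (4 : k) • ∑ u, ∑ v, c ⁅F.dual u, F.dual v⁆ * c ⁅F.vec u, F.vec v⁆ := by
        simp only [move, Finset.sum_sub_distrib, Finset.smul_sum, Finset.mul_sum]
        rw [Finset.sum_comm]
    _ = (-2 : k) • F.quad c F.adCasimir + (4 : k) • F.quad c F.adCasimir := by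
        simp only [F.sum_adQuad_mul_lie_eq_adCasimir hB hc, F.sum_lie_mul_lie hB, mul_smul_comm,
          ← Finset.smul_sum, smul_neg, sub_neg_eq_add]
        rfl
    _ = (2 * LinearMap.trace k L F.adCasimir) • (1 : R) := by
        rw [F.quad_adCasimir hB hc]; module

theorem adCubic_mul_self (hB : B.lieInvariant L) (hc : IsCliffordMap B c) :
    F.adCubic c * F.adCubic c = (6 * LinearMap.trace k L F.adCasimir) • (1 : R) := by
  refine smul_right_injective R (two_ne_zero (α := k)) ?_
  calc (2 : k) • (F.adCubic c * F.adCubic c)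
      = ∑ u, (F.adCubic c * c (F.dual u) + c (F.dual u) * F.adCubic c) * F.adQuad c (F.vec u) := by
        have commute : ∀ y, F.adCubic c * F.adQuad c y = F.adQuad c y * F.adCubic c := fun y =>
          (sub_eq_zero.mp (F.lie_adQuad_adCubic hB hc y)).symm
        simp only [add_mul, Finset.sum_add_distrib, mul_assoc, commute]
        simp only [← mul_assoc, ← Finset.sum_mul]
        simp only [mul_assoc, ← Finset.mul_sum, ← adCubic_eq_sum, two_smul]
    _ = (6 : k) • ∑ u, F.adQuad c (F.dual u) * F.adQuad c (F.vec u) := by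
        simp only [F.adCubic_anticomm_vec hB hc, smul_mul_assoc, Finset.smul_sum]
    _ = (2 : k) • (6 * LinearMap.trace k L F.adCasimir) • (1 : R) := by
        rw [F.sum_adQuad_mul_adQuad hB hc]; module

theorem adDirac_mul_self (hB : B.lieInvariant L) (hc : IsCliffordMap B c) {r : L →ₗ[k] R}
    (hr : ∀ a b, r ⁅a, b⁆ = ⁅r a, r b⁆) (hrc : ∀ a b, Commute (r a) (c b)) :
    F.adDirac c r * F.adDirac c r
      = (144 : k) • ∑ u, r (F.dual u) * r (F.vec u)
        + (6 * LinearMap.trace k L F.adCasimir) • (1 : R) := by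
  have square := F.two_smul_sum_mul_self hB hc hr hrc
  have cross := F.sum_mul_adCubic_anticomm hB hc hrc
  rw [adDirac, dirac, ← adCubic, ← F.adCubic_mul_self hB hc]
  simp only [sub_mul, mul_sub, smul_mul_assoc, mul_smul_comm]
  linear_combination (norm := module) (72 : k) • square - (12 : k) • cross

end Cancel
end Lie

end DualFrame

/-- `p` is the `B`-orthogonal projection of `L` along the Lie subalgebra `H`, onto the complement
written `𝔭` for a reductive pair `(𝔤, 𝔥)`. -/
structure IsReductiveProjection {k L : Type*} [CommRing k] [LieRing L] [LieAlgebra k L]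
    (B : LinearMap.BilinForm k L) (H : LieSubalgebra k L) (p : Module.End k L) : Prop where
  idem : IsIdempotentElem p
  selfAdjoint : LinearMap.IsAdjointPair B B p p
  mem_iff (z : L) : z ∈ H ↔ p z = 0

section Relative

attribute [local instance] LieRing.ofAssociativeRing

variable {k L : Type*} [CommRing k] [LieRing L] [LieAlgebra k L]

/-- The bracket `[·, ·]_𝔭` of `𝔭` followed by the projection to `𝔭`, as a product on all of `L`. -/
def relBracket (p : Module.End k L) : L →ₗ[k] Module.End k L :=
  LinearMap.mulLeftRight k (p, p) ∘ₗ (LieAlgebra.ad k L).toLinearMap ∘ₗ p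

/-- The isotropy action of `𝔥` on `𝔭`, as a product on all of `L`. -/
def isotropy (p : Module.End k L) : L →ₗ[k] Module.End k L :=
  LinearMap.mulRight k p ∘ₗ (LieAlgebra.ad k L).toLinearMap ∘ₗ (1 - p)

/-- The component in `𝔥` of the bracket of `𝔭`, as a product on all of `L`. -/
def verticalBracket (p : Module.End k L) : L →ₗ[k] Module.End k L :=
  LinearMap.mulLeftRight k (1 - p, p) ∘ₗ (LieAlgebra.ad k L).toLinearMap ∘ₗ p

/-- The bracket of `𝔥`, extended by zero to a product on all of `L`. -/
def subBracket (p : Module.End k L) : L →ₗ[k] Module.End k L :=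
  LinearMap.mulRight k (1 - p) ∘ₗ (LieAlgebra.ad k L).toLinearMap ∘ₗ (1 - p)

theorem relBracket_apply (p : Module.End k L) (a : L) :
    relBracket p a = p * LieAlgebra.ad k L (p a) * p := rfl

theorem isotropy_apply (p : Module.End k L) (a : L) :
    isotropy p a = LieAlgebra.ad k L (a - p a) * p := rfl

theorem verticalBracket_apply (p : Module.End k L) (a : L) :
    verticalBracket p a = (1 - p) * LieAlgebra.ad k L (p a) * p := rfl

theorem subBracket_apply (p : Module.End k L) (a : L) :
    subBracket p a = LieAlgebra.ad k L (a - p a) * (1 - p) := rfl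

theorem ad_eq_add_brackets (p : Module.End k L) :
    (LieAlgebra.ad k L).toLinearMap
      = relBracket p + verticalBracket p - (isotropy p).flip + isotropy p + subBracket p := by
  ext a b
  simp only [LinearMap.add_apply, LinearMap.sub_apply, LinearMap.flip_apply, relBracket_apply,
    verticalBracket_apply, isotropy_apply, subBracket_apply, Module.End.mul_apply,
    LieHom.coe_toLinearMap, LieAlgebra.ad_apply, Module.End.one_apply, lie_sub, sub_lie]
  rw [← lie_skew (p a) b, ← lie_skew (p a) (p b)]
  abel

end Relative

theorem twelve_ne_zero (k : Type*) [Field k] [NeZero (2 : k)] [NeZero (3 : k)] : (12 : k) ≠ 0 := by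
  rw [show (12 : k) = 2 * 2 * 3 by norm_num]
  exact mul_ne_zero (mul_ne_zero two_ne_zero two_ne_zero) three_ne_zero

theorem twentyfour_ne_zero (k : Type*) [Field k] [NeZero (2 : k)] [NeZero (3 : k)] :
    (24 : k) ≠ 0 := by
  rw [show (24 : k) = 2 * 12 by norm_num]
  exact mul_ne_zero two_ne_zero (twelve_ne_zero k)

theorem four_ne_zero_of_two (k : Type*) [Field k] [NeZero (2 : k)] : (4 : k) ≠ 0 := by
  rw [show (4 : k) = 2 * 2 by norm_num]
  exact mul_ne_zero two_ne_zero two_ne_zero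

section Spin

attribute [local instance] LieRing.ofAssociativeRing

variable {k L κ R : Type*} [Field k] [LieRing L] [LieAlgebra k L] [Fintype κ] [Ring R]
  [Algebra k R] {B : LinearMap.BilinForm k L}

namespace DualFrame

variable (F : DualFrame B κ) (c r : L →ₗ[k] R) (p : Module.End k L)

/-- The map `z ↦ -(1/4) ∑ c(x*ᵤ) c([z, p xᵤ])`, which on `𝔥` is the spin representation `ads_𝔭`
induced by the isotropy action on `𝔭`. -/
def relSpin : L →ₗ[k] R :=
  -(1 / 4 : k) • F.quad c ∘ₗ LinearMap.mulRight k p ∘ₗ (LieAlgebra.ad k L).toLinearMap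

/-- The action `ρ'(z) = r(z) + ads_𝔭(z)` of `𝔥` on `U(𝔤) ⊗ Cl(𝔭)`. -/
def relAction (H : LieSubalgebra k L) : H →ₗ[k] R :=
  (r + F.relSpin c p) ∘ₗ (H.incl : H →ₗ[k] L)

/-- Twelve times Kostant's cubic Dirac operator `D_{𝔤/𝔥}`. -/
def relDirac : R := F.dirac c (r ∘ₗ p) (relBracket p)

theorem relSpin_apply (z : L) :
    F.relSpin c p z = -(1 / 4 : k) • F.quad c (LieAlgebra.ad k L z * p) := rfl

variable {c r p}

theorem neg_four_smul_relSpin [NeZero (2 : k)] (z : L) :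
    (-4 : k) • F.relSpin c p z = F.quad c (LieAlgebra.ad k L z * p) := by
  rw [relSpin_apply, smul_smul, neg_mul_neg, mul_one_div_cancel (four_ne_zero_of_two k), one_smul]

theorem commute_relSpin (hrc : ∀ a b, Commute (r a) (c b)) (a z : L) :
    Commute (r a) (F.relSpin c p z) :=
  (F.commute_quad (hrc a) _).smul_right _

end DualFrame

end Spin

namespace IsReductiveProjection

attribute [local instance] LieRing.ofAssociativeRing

section CommRing

variable {k L κ : Type*} [CommRing k] [LieRing L] [LieAlgebra k L] [Fintype κ]
  {B : LinearMap.BilinForm k L} {H : LieSubalgebra k L} {p : Module.End k L}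
  (hp : IsReductiveProjection B H p) (F : DualFrame B κ)

include hp

theorem sub_apply_mem (a : L) : a - p a ∈ H := by
  rw [hp.mem_iff, map_sub, ← Module.End.mul_apply, hp.idem.eq, sub_self]

theorem apply_eq_zero {z : L} (hz : z ∈ H) : p z = 0 := (hp.mem_iff z).mp hz

theorem apply_orthogonal {z : L} (hz : z ∈ H) (a : L) : B z (p a) = 0 := by
  rw [← hp.selfAdjoint, hp.apply_eq_zero hz, map_zero, LinearMap.zero_apply]

include F

theorem apply_lie_apply (hB : B.lieInvariant L) {z : L} (hz : z ∈ H) (a : L) :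
    p ⁅z, p a⁆ = ⁅z, p a⁆ := by
  refine sub_eq_zero.mp (F.eq_zero_of_forall_apply_eq_zero fun y => ?_)
  rw [map_sub, LinearMap.sub_apply, hp.selfAdjoint, ← map_sub, ← neg_sub y, map_neg, hB, neg_neg,
    ← F.symm.eq]
  exact hp.apply_orthogonal (H.lie_mem hz (hp.sub_apply_mem y)) a

theorem commute_ad (hB : B.lieInvariant L) {z : L} (hz : z ∈ H) :
    Commute (LieAlgebra.ad k L z) p := by
  ext a
  have apply_lie_sub := hp.apply_eq_zero (H.lie_mem hz (hp.sub_apply_mem a))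
  rw [lie_sub, map_sub, sub_eq_zero, hp.apply_lie_apply F hB hz] at apply_lie_sub
  exact apply_lie_sub.symm

theorem isSkewAdjoint_ad_mul (hB : B.lieInvariant L) {z : L} (hz : z ∈ H) :
    B.IsSkewAdjoint (LieAlgebra.ad k L z * p) := fun x y => by
  have hcomm : p ⁅z, y⁆ = ⁅z, p y⁆ := (DFunLike.congr_fun (hp.commute_ad F hB hz).eq y).symm
  change B ⁅z, p x⁆ y = B x (-⁅z, p y⁆)
  rw [hB, hp.selfAdjoint, hcomm, map_neg]

omit F in
theorem isSkewAdjoint_relBracket (hB : B.lieInvariant L) (a : L) :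
    B.IsSkewAdjoint (relBracket p a) := fun x y => by
  simp [relBracket_apply, hp.selfAdjoint _ _, hB _ _ _]

theorem lie_relBracket (hB : B.lieInvariant L) {z : L} (hz : z ∈ H) (a : L) :
    ⁅LieAlgebra.ad k L z * p, relBracket p a⁆ = relBracket p ((LieAlgebra.ad k L z * p) a) := by
  have hcomm := (hp.commute_ad F hB hz).eq
  simp only [relBracket_apply, Module.End.mul_apply, LieAlgebra.ad_apply,
    hp.apply_lie_apply F hB hz, LieHom.map_lie, Ring.lie_def]
  generalize LieAlgebra.ad k L z = T at hcomm ⊢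
  generalize LieAlgebra.ad k L (p a) = S
  calc T * p * (p * S * p) - p * S * p * (T * p)
      = T * (p * p) * S * p - p * S * (p * T) * p := by noncomm_ring
    _ = (T * p) * S * p - p * S * (p * T) * p := by rw [hp.idem.eq]
    _ = (p * T) * S * p - p * S * (T * p) * p := by rw [hcomm]
    _ = p * T * S * p - p * S * T * (p * p) := by noncomm_ring
    _ = p * (T * S - S * T) * p := by rw [hp.idem.eq]; noncomm_ring

end CommRing

section Restrict

variable {k L κ κH M : Type*} [CommRing k] [LieRing L] [LieAlgebra k L] [Fintype κ] [Fintype κH]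
  [AddCommGroup M] [Module k M] {B : LinearMap.BilinForm k L} {H : LieSubalgebra k L}
  {p : Module.End k L} (hp : IsReductiveProjection B H p) (F : DualFrame B κ)
  (G : DualFrame (B.comp (H.incl : H →ₗ[k] L) (H.incl : H →ₗ[k] L)) κH)

include hp

theorem sum_apply_sub_apply (f : L →ₗ[k] L →ₗ[k] M) :
    ∑ u, f (F.dual u) (F.vec u - p (F.vec u)) = ∑ a, f (G.dual a) (G.vec a) := by
  have expand_left : ∀ u, F.vec u - p (F.vec u)
      = ∑ a, B (G.dual a) (F.vec u) • (G.vec a : L) := fun u => by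
    have h := congrArg (H.incl : H →ₗ[k] L)
      (G.sum_dual_smul_vec ⟨F.vec u - p (F.vec u), hp.sub_apply_mem _⟩)
    simp only [map_sum, map_smul] at h
    refine h.symm.trans (Finset.sum_congr rfl fun a _ => ?_)
    change B (G.dual a) (F.vec u - p (F.vec u)) • (G.vec a : L) = _
    rw [map_sub, hp.apply_orthogonal (G.dual a).2, sub_zero]
  simp_rw [expand_left, map_sum]
  rw [Finset.sum_comm]
  refine Finset.sum_congr rfl fun a _ => ?_
  conv_rhs => rw [← F.sum_vec_smul_dual (G.dual a)]
  simp

end Restrict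

section Spin

variable {k L κ R : Type*} [Field k] [LieRing L] [LieAlgebra k L] [Fintype κ] [Ring R]
  [Algebra k R] {B : LinearMap.BilinForm k L} {H : LieSubalgebra k L} {p : Module.End k L}
  (hp : IsReductiveProjection B H p) (F : DualFrame B κ) {c r : L →ₗ[k] R}

include hp

theorem cubic_isotropy_add_flip (hc : IsCliffordMap B c) :
    F.cubic c (isotropy p) + F.cubic c (isotropy p).flip = 0 := by
  have hadj := F.sum_apply_adjoint (isotropy p).flip hp.selfAdjoint
  have left : ∀ a b, isotropy p a (p b) = isotropy p a b := fun a b => by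
    rw [isotropy_apply, Module.End.mul_apply, ← Module.End.mul_apply p, hp.idem.eq,
      Module.End.mul_apply]
  have right : ∀ a, isotropy p (p a) = 0 := fun a => by
    rw [isotropy_apply, ← Module.End.mul_apply p, hp.idem.eq, sub_self, map_zero, zero_mul]
  simp only [LinearMap.flip_apply, left, right, LinearMap.zero_apply, Finset.sum_const_zero] at hadj
  rw [F.cubic_add_cubic_flip hc, ← map_sum, hadj, map_zero, smul_zero]

include F in
theorem isAdjointPair_verticalBracket (hB : B.lieInvariant L) (a : L) :
    LinearMap.IsAdjointPair B B (verticalBracket p a) ((isotropy p).flip a) := fun x y => by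
  have hy := hp.apply_lie_apply F hB (hp.sub_apply_mem y) a
  simp only [verticalBracket_apply, LinearMap.flip_apply, isotropy_apply, Module.End.mul_apply,
    LieAlgebra.ad_apply, LinearMap.sub_apply, Module.End.one_apply]
  rw [← hy, ← hp.selfAdjoint, map_sub, LinearMap.sub_apply, hp.selfAdjoint, ← map_sub, hB,
    ← map_neg, lie_skew]

theorem cubic_verticalBracket (hB : B.lieInvariant L) (hc : IsCliffordMap B c) :
    F.cubic c (verticalBracket p) = F.cubic c (isotropy p) := by
  have trace_eq_zero : ∀ a, LinearMap.trace k L (verticalBracket p a) = 0 := fun a => by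
    rw [verticalBracket_apply, LinearMap.trace_mul_cycle, hp.idem.mul_one_sub_self, zero_mul,
      map_zero]
  have quad_eq : ∀ a, F.quad c (verticalBracket p a) = -F.quad c ((isotropy p).flip a) :=
      fun a => by
    rw [eq_neg_iff_add_eq_zero, F.quad_add_quad_adjoint hc
      (hp.isAdjointPair_verticalBracket F hB a), trace_eq_zero, mul_zero, zero_smul]
  rw [eq_neg_of_add_eq_zero_left (hp.cubic_isotropy_add_flip F hc)]
  simp only [DualFrame.cubic_apply, quad_eq, mul_neg, Finset.sum_neg_distrib]

theorem adCubic_eq_add (hB : B.lieInvariant L) (hc : IsCliffordMap B c) :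
    F.adCubic c = F.cubic c (relBracket p) + (3 : k) • F.cubic c (isotropy p)
      + F.cubic c (subBracket p) := by
  rw [DualFrame.adCubic, ad_eq_add_brackets p, map_add, map_add, map_sub, map_add,
    hp.cubic_verticalBracket F hB hc,
    eq_neg_of_add_eq_zero_right (hp.cubic_isotropy_add_flip F hc)]
  module

end Spin

section Relative

variable {k L κ κH R : Type*} [Field k] [LieRing L] [LieAlgebra k L] [Fintype κ] [Fintype κH]
  [Ring R] [Algebra k R] {B : LinearMap.BilinForm k L} {H : LieSubalgebra k L}
  {p : Module.End k L} (hp : IsReductiveProjection B H p) (F : DualFrame B κ)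
  (G : DualFrame (B.comp (H.incl : H →ₗ[k] L) (H.incl : H →ₗ[k] L)) κH) {c r : L →ₗ[k] R}

include hp

theorem cubic_subBracket :
    F.cubic c (subBracket p) = G.adCubic (c ∘ₗ (H.incl : H →ₗ[k] L)) := by
  have inner : ∀ z : H, F.quad c (LieAlgebra.ad k L z * (1 - p))
      = G.adQuad (c ∘ₗ (H.incl : H →ₗ[k] L)) z := fun z =>
    hp.sum_apply_sub_apply F G ((LinearMap.mul k R).compl₁₂ c (c ∘ₗ LieAlgebra.ad k L z))
  refine (hp.sum_apply_sub_apply F G ((LinearMap.mul k R).compl₁₂ c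
    (F.quad c ∘ₗ LinearMap.mulRight k (1 - p) ∘ₗ (LieAlgebra.ad k L).toLinearMap))).trans ?_
  exact Finset.sum_congr rfl fun a _ => congrArg (c (G.dual a) * ·) (inner (G.vec a))

theorem cubic_isotropy [NeZero (2 : k)] :
    F.cubic c (isotropy p) = (-4 : k) • ∑ a, c (G.dual a) * F.relSpin c p (G.vec a) := by
  refine (hp.sum_apply_sub_apply F G ((LinearMap.mul k R).compl₁₂ c
    (F.quad c ∘ₗ LinearMap.mulRight k p ∘ₗ (LieAlgebra.ad k L).toLinearMap))).trans ?_
  rw [Finset.smul_sum]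
  refine Finset.sum_congr rfl fun a _ => ?_
  rw [← mul_smul_comm, F.neg_four_smul_relSpin]
  rfl

theorem lie_relSpin_vec [NeZero (2 : k)] (hB : B.lieInvariant L) (hc : IsCliffordMap B c) {z : L}
    (hz : z ∈ H) (y : L) :
    ⁅F.relSpin c p z, c y⁆ = c ((LieAlgebra.ad k L z * p) y) := by
  have hlie := F.lie_quad_vec hc (hp.isSkewAdjoint_ad_mul F hB hz) y
  refine smul_right_injective R (neg_ne_zero.mpr (four_ne_zero_of_two k)) ?_
  change (-4 : k) • _ = (-4 : k) • _
  rw [← hlie, ← F.neg_four_smul_relSpin, Ring.lie_def, Ring.lie_def, smul_sub, smul_mul_assoc,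
    mul_smul_comm]

theorem lie_relSpin [NeZero (2 : k)] (hB : B.lieInvariant L) (hc : IsCliffordMap B c) {z w : L}
    (hz : z ∈ H) (hw : w ∈ H) :
    ⁅F.relSpin c p z, F.relSpin c p w⁆ = F.relSpin c p ⁅z, w⁆ := by
  have hlie := F.lie_quad (hp.isSkewAdjoint_ad_mul F hB hz) (hp.lie_relSpin_vec F hB hc hz)
    (LieAlgebra.ad k L w * p)
  have bracket : ⁅LieAlgebra.ad k L z * p, LieAlgebra.ad k L w * p⁆
      = LieAlgebra.ad k L ⁅z, w⁆ * p := by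
    rw [LieHom.map_lie, Ring.lie_def, Ring.lie_def, sub_mul,
      ← (hp.commute_ad F hB hw).mul_mul_mul_comm, ← (hp.commute_ad F hB hz).mul_mul_mul_comm,
      hp.idem.eq]
  rw [F.relSpin_apply c p w, F.relSpin_apply c p ⁅z, w⁆, ← bracket, ← hlie, Ring.lie_def,
    Ring.lie_def, mul_smul_comm, smul_mul_assoc, smul_sub]

theorem commute_relSpin_vec [NeZero (2 : k)] (hB : B.lieInvariant L) (hc : IsCliffordMap B c)
    {z w : L} (hz : z ∈ H) (hw : w ∈ H) : Commute (F.relSpin c p z) (c w) := by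
  have hlie := hp.lie_relSpin_vec F hB hc hz w
  rw [Module.End.mul_apply, hp.apply_eq_zero hw, map_zero, map_zero] at hlie
  exact sub_eq_zero.mp hlie

theorem relAction_lie [NeZero (2 : k)] (hB : B.lieInvariant L) (hc : IsCliffordMap B c)
    (hr : ∀ a b, r ⁅a, b⁆ = ⁅r a, r b⁆) (hrc : ∀ a b, Commute (r a) (c b)) (z w : H) :
    F.relAction c r p H ⁅z, w⁆ = ⁅F.relAction c r p H z, F.relAction c r p H w⁆ := by
  have cross : ⁅F.relSpin c p z, r w⁆ = 0 :=
    sub_eq_zero.mpr (F.commute_relSpin hrc _ _).symm.eq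
  have cross' : ⁅r z, F.relSpin c p w⁆ = 0 := sub_eq_zero.mpr (F.commute_relSpin hrc _ _).eq
  change r ⁅(z : L), (w : L)⁆ + F.relSpin c p ⁅(z : L), (w : L)⁆
    = ⁅r z + F.relSpin c p z, r w + F.relSpin c p w⁆
  rw [add_lie, lie_add, lie_add, cross, cross', hr, hp.lie_relSpin F hB hc z.2 w.2, add_zero,
    zero_add]

theorem commute_relAction_vec [NeZero (2 : k)] (hB : B.lieInvariant L) (hc : IsCliffordMap B c)
    (hrc : ∀ a b, Commute (r a) (c b)) (z w : H) : Commute (F.relAction c r p H z) (c w) :=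
  (hrc z w).add_left (hp.commute_relSpin_vec F hB hc z.2 w.2)

theorem adDirac_relAction [NeZero (2 : k)] (hB : B.lieInvariant L) (hc : IsCliffordMap B c) :
    G.adDirac (c ∘ₗ (H.incl : H →ₗ[k] L)) (F.relAction c r p H)
      = (12 : k) • (∑ a, r (G.vec a) * c (G.dual a) + ∑ a, c (G.dual a) * F.relSpin c p (G.vec a))
        - G.adCubic (c ∘ₗ (H.incl : H →ₗ[k] L)) := by
  have commute : ∀ a, F.relSpin c p (G.vec a) * c (G.dual a)
      = c (G.dual a) * F.relSpin c p (G.vec a) := fun a =>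
    (hp.commute_relSpin_vec F hB hc (G.vec a).2 (G.dual a).2).eq
  simp only [← commute, ← Finset.sum_add_distrib, ← add_mul]
  rfl

theorem adDirac_eq_add [NeZero (2 : k)] (hB : B.lieInvariant L) (hc : IsCliffordMap B c) :
    F.adDirac c r
      = F.relDirac c r p
        + G.adDirac (c ∘ₗ (H.incl : H →ₗ[k] L)) (F.relAction c r p H) := by
  have linear_part : ∑ u, r (F.vec u) * c (F.dual u)
      = ∑ u, r (p (F.vec u)) * c (F.dual u) + ∑ a, r (G.vec a) * c (G.dual a) := by
    have h := hp.sum_apply_sub_apply F G ((LinearMap.mul k R).compl₁₂ r c).flip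
    simp only [LinearMap.flip_apply, LinearMap.compl₁₂_apply, LinearMap.mul_apply', map_sub,
      Finset.sum_sub_distrib] at h
    exact sub_eq_iff_eq_add'.mp h
  rw [hp.adDirac_relAction F G hB hc, DualFrame.adDirac, DualFrame.relDirac, DualFrame.dirac,
    DualFrame.dirac, ← DualFrame.adCubic,
    hp.adCubic_eq_add F hB hc, hp.cubic_subBracket F G, hp.cubic_isotropy F G, linear_part]
  simp only [LinearMap.comp_apply]
  module

theorem vec_mul_relDirac (hB : B.lieInvariant L) (hc : IsCliffordMap B c)
    (hrc : ∀ a b, Commute (r a) (c b)) {z : L} (hz : z ∈ H) :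
    c z * F.relDirac c r p = -(F.relDirac c r p * c z) := by
  have anticomm := F.dirac_anticomm_vec (r := r ∘ₗ p) hc (fun a => hrc (p a))
    (hp.isSkewAdjoint_relBracket hB) z
  have left : relBracket p z = 0 := by rw [relBracket_apply, hp.apply_eq_zero hz]; simp
  have right : (relBracket p).flip z = 0 := by ext; simp [relBracket_apply, hp.apply_eq_zero hz]
  rw [left, right, LinearMap.comp_apply, hp.apply_eq_zero hz] at anticomm
  simp only [map_zero, smul_zero, sub_zero, add_zero] at anticomm
  exact eq_neg_of_add_eq_zero_right anticomm

theorem relAction_mul_relDirac [NeZero (2 : k)] (hB : B.lieInvariant L) (hc : IsCliffordMap B c)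
    (hr : ∀ a b, r ⁅a, b⁆ = ⁅r a, r b⁆) (hrc : ∀ a b, Commute (r a) (c b)) (z : H) :
    F.relAction c r p H z * F.relDirac c r p
      = F.relDirac c r p * F.relAction c r p H z := by
  refine sub_eq_zero.mp (F.lie_dirac_eq_zero (hp.isSkewAdjoint_ad_mul F hB z.2) (fun y => ?_)
    (fun y => ?_) (hp.lie_relBracket F hB z.2))
  · change ⁅r z + F.relSpin c p z, c y⁆ = _
    rw [add_lie, hp.lie_relSpin_vec F hB hc z.2, Ring.lie_def, (hrc _ _).eq, sub_self, zero_add]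
  · change ⁅r z + F.relSpin c p z, r (p y)⁆ = r (p ⁅(z : L), p y⁆)
    rw [add_lie, hp.apply_lie_apply F hB z.2, hr, Ring.lie_def (F.relSpin c p z),
      (F.commute_relSpin hrc _ _).eq, sub_self, add_zero]

theorem relDirac_mul_self [NeZero (2 : k)] (hB : B.lieInvariant L) (hc : IsCliffordMap B c)
    (hr : ∀ a b, r ⁅a, b⁆ = ⁅r a, r b⁆) (hrc : ∀ a b, Commute (r a) (c b)) :
    F.relDirac c r p * F.relDirac c r p
      = F.adDirac c r * F.adDirac c r
        - G.adDirac (c ∘ₗ (H.incl : H →ₗ[k] L)) (F.relAction c r p H)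
          * G.adDirac (c ∘ₗ (H.incl : H →ₗ[k] L)) (F.relAction c r p H) := by
  have anticomm : G.adDirac (c ∘ₗ (H.incl : H →ₗ[k] L)) (F.relAction c r p H) * F.relDirac c r p
      = -(F.relDirac c r p * G.adDirac (c ∘ₗ (H.incl : H →ₗ[k] L)) (F.relAction c r p H)) :=
    G.dirac_mul_eq_neg_mul_dirac (fun z => hp.vec_mul_relDirac F hB hc hrc z.2)
      (hp.relAction_mul_relDirac F hB hc hr hrc) _
  rw [hp.adDirac_eq_add F G hB hc, add_mul, mul_add, mul_add, anticomm]
  abel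

theorem relDirac_mul_self_eq_sum [NeZero (2 : k)] [NeZero (3 : k)] (hB : B.lieInvariant L)
    (hc : IsCliffordMap B c) (hr : ∀ a b, r ⁅a, b⁆ = ⁅r a, r b⁆)
    (hrc : ∀ a b, Commute (r a) (c b)) :
    F.relDirac c r p * F.relDirac c r p
      = (12 * 12 : k) • (∑ u, r (F.dual u) * r (F.vec u)
          - ∑ a, F.relAction c r p H (G.dual a) * F.relAction c r p H (G.vec a)
          + ((1 / 24 : k) * (LinearMap.trace k L F.adCasimir - LinearMap.trace k H G.adCasimir))
            • (1 : R)) := by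
  have scale : (12 * 12 : k) * (1 / 24) = 6 := by
    rw [mul_one_div, div_eq_iff (twentyfour_ne_zero k)]
    norm_num
  rw [hp.relDirac_mul_self F G hB hc hr hrc, F.adDirac_mul_self hB hc hr hrc,
    G.adDirac_mul_self (fun x y z => hB x y z) (fun x y => hc x y) (hp.relAction_lie F hB hc hr hrc)
      (hp.commute_relAction_vec F hB hc hrc), smul_add, smul_smul, ← mul_assoc, scale]
  module

end Relative

end IsReductiveProjection

section Orthogonal

variable {k V κ κN : Type*} [CommRing k] [AddCommGroup V] [Module k V]
  {B : LinearMap.BilinForm k V} {N N' : Submodule k V} {x xd : κN → V} {y yd : κ → V}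

theorem codisjoint_of_span_sumElim (hx : ∀ a, x a ∈ N) (hy : ∀ i, y i ∈ N')
    (hspan : Submodule.span k (Set.range (Sum.elim x y)) = ⊤) : Codisjoint N N' := by
  rw [codisjoint_iff_le_sup, ← hspan, Submodule.span_le, Set.Sum.elim_range]
  exact Set.union_subset (Set.range_subset_iff.mpr fun a => Submodule.mem_sup_left (hx a))
    (Set.range_subset_iff.mpr fun i => Submodule.mem_sup_right (hy i))

theorem sumElim_dual_of_mem_orthogonal [DecidableEq κ] [DecidableEq κN] (hB : B.IsSymm)
    (hx : ∀ a, x a ∈ N) (hxd : ∀ a, xd a ∈ N) (hy : ∀ i, y i ∈ B.orthogonal N)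
    (hyd : ∀ i, yd i ∈ B.orthogonal N)
    (hdualx : ∀ a b, B (xd a) (x b) = if a = b then 1 else 0)
    (hdualy : ∀ i j, B (yd i) (y j) = if i = j then 1 else 0) (u v : κN ⊕ κ) :
    B (Sum.elim xd yd u) (Sum.elim x y v) = if u = v then 1 else 0 := by
  have hxdy : ∀ a i, B (xd a) (y i) = 0 := fun a i => hy i _ (hxd a)
  have hydx : ∀ i a, B (yd i) (x a) = 0 := fun i a => (hB.eq _ _).trans (hyd i _ (hx a))
  rcases u with a | i <;> rcases v with b | j <;> simp [hdualx, hdualy, hxdy, hydx]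

end Orthogonal

section Restrict

variable {k L κ κH : Type*} [CommRing k] [LieRing L] [LieAlgebra k L]
  {B : LinearMap.BilinForm k L} {H : LieSubalgebra k L}

theorem IsReductiveProjection.of_codisjoint (hB : B.IsSymm)
    (hsup : Codisjoint H.toSubmodule (B.orthogonal H.toSubmodule)) {p : Module.End k L}
    (hmem : ∀ x, p x ∈ B.orthogonal H.toSubmodule)
    (hfix : ∀ y ∈ B.orthogonal H.toSubmodule, p y = y) (hzero : ∀ z ∈ H, p z = 0) :
    IsReductiveProjection B H p := by
  have sub_mem : ∀ x, x - p x ∈ H := fun x => by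
    obtain ⟨z, hz, y, hy, rfl⟩ := Submodule.mem_sup.mp (hsup.eq_top.ge (Submodule.mem_top (x := x)))
    rwa [map_add, hzero z hz, hfix y hy, zero_add, add_sub_cancel_right]
  have orth : ∀ x y, B x (p y) = B (p x) (p y) := fun x y => by
    rw [← sub_eq_zero, ← LinearMap.sub_apply, ← map_sub]
    exact hmem y _ (sub_mem x)
  refine ⟨LinearMap.ext fun x => hfix _ (hmem x), fun x y => ?_, fun z => ⟨hzero z, fun hz => ?_⟩⟩
  · rw [orth x y, hB.eq, hB.eq (p x), orth y x]
  · simpa [hz] using sub_mem z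

/-- The part of a dual frame adapted to `H ⊕ Hᗮ` that lies in `H`. -/
def DualFrame.restrict [Fintype κ] [Fintype κH] (F : DualFrame B (κH ⊕ κ))
    (hvec : ∀ a, F.vec (Sum.inl a) ∈ H) (hdual : ∀ a, F.dual (Sum.inl a) ∈ H)
    (horth : ∀ i, ∀ z ∈ H, B (F.dual (Sum.inr i)) z = 0) :
    DualFrame (B.comp (H.incl : H →ₗ[k] L) (H.incl : H →ₗ[k] L)) κH where
  vec a := ⟨F.vec (Sum.inl a), hvec a⟩
  dual a := ⟨F.dual (Sum.inl a), hdual a⟩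
  symm := ⟨fun x y => F.symm.eq x y⟩
  sum_dual_smul_vec z := by
    have expand := F.sum_dual_smul_vec z
    rw [Fintype.sum_sum_type] at expand
    simp only [horth _ _ z.2, zero_smul, Finset.sum_const_zero, add_zero] at expand
    exact Subtype.ext (by simpa using expand)

end Restrict

section Adapted

attribute [local instance] LieRing.ofAssociativeRing

variable {k L κ κH R : Type*} [Field k] [LieRing L] [LieAlgebra k L] [Fintype κ]
  [Fintype κH] [Ring R] [Algebra k R] {B : LinearMap.BilinForm k L} (F : DualFrame B (κH ⊕ κ))
  (c r : L →ₗ[k] R) {p : Module.End k L}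

theorem DualFrame.relDirac_eq_sum (hinl : ∀ a, p (F.vec (Sum.inl a)) = 0)
    (hinr : ∀ i, p (F.vec (Sum.inr i)) = F.vec (Sum.inr i)) :
    F.relDirac c r p
      = (12 : k) • ∑ i, r (F.vec (Sum.inr i)) * c (F.dual (Sum.inr i))
        - ∑ i, ∑ j, c (F.dual (Sum.inr i)) * c (F.dual (Sum.inr j))
            * c (p ⁅F.vec (Sum.inr i), F.vec (Sum.inr j)⁆) := by
  simp [relDirac, dirac, cubic_apply, quad_apply, relBracket_apply, Fintype.sum_sum_type, hinl,
    hinr, Finset.mul_sum, mul_assoc]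

theorem IsReductiveProjection.relSpin_eq_sum {H : LieSubalgebra k L}
    (hp : IsReductiveProjection B H p) (hB : B.lieInvariant L)
    (hinl : ∀ a, p (F.vec (Sum.inl a)) = 0)
    (hinr : ∀ i, p (F.vec (Sum.inr i)) = F.vec (Sum.inr i)) {z : L} (hz : z ∈ H) :
    F.relSpin c p z
      = -(1 / 4 : k) • ∑ i, c (F.dual (Sum.inr i)) * c (p ⁅z, F.vec (Sum.inr i)⁆) := by
  have apply_lie : ∀ i, p ⁅z, F.vec (Sum.inr i)⁆ = ⁅z, F.vec (Sum.inr i)⁆ := fun i => by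
    simpa only [hinr] using hp.apply_lie_apply F hB hz (F.vec (Sum.inr i))
  simp [DualFrame.relSpin_apply, DualFrame.quad_apply, Fintype.sum_sum_type, hinl, hinr, apply_lie]

end Adapted

section Tensor

attribute [local instance] LieRing.ofAssociativeRing

variable {k L : Type*} [Field k] [LieRing L] [LieAlgebra k L] (Q : QuadraticForm k L)

/-- The inclusion of `𝔤` in `U(𝔤) ⊗ Cl(𝔤)` through the second factor. -/
def cliffordInclusion : L →ₗ[k] UniversalEnvelopingAlgebra k L ⊗[k] CliffordAlgebra Q :=
  Algebra.TensorProduct.includeRight.toLinearMap ∘ₗ ι Q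

/-- The inclusion of `𝔤` in `U(𝔤) ⊗ Cl(𝔤)` through the first factor. -/
def envelopingInclusion : L →ₗ[k] UniversalEnvelopingAlgebra k L ⊗[k] CliffordAlgebra Q :=
  Algebra.TensorProduct.includeLeft.toLinearMap ∘ₗ (UniversalEnvelopingAlgebra.ι k).toLinearMap

theorem cliffordInclusion_apply (y : L) : cliffordInclusion Q y = 1 ⊗ₜ ι Q y := rfl

theorem envelopingInclusion_apply (x : L) :
    envelopingInclusion Q x = UniversalEnvelopingAlgebra.ι k x ⊗ₜ 1 := rfl

theorem envelopingInclusion_mul_cliffordInclusion (x y : L) :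
    envelopingInclusion Q x * cliffordInclusion Q y
      = UniversalEnvelopingAlgebra.ι k x ⊗ₜ ι Q y := by
  simp [envelopingInclusion_apply, cliffordInclusion_apply]

theorem envelopingInclusion_lie (x y : L) :
    envelopingInclusion Q ⁅x, y⁆ = ⁅envelopingInclusion Q x, envelopingInclusion Q y⁆ := by
  rw [envelopingInclusion_apply, LieHom.map_lie, Ring.lie_def, Ring.lie_def]
  simp [envelopingInclusion_apply, sub_tmul]

theorem commute_envelopingInclusion_cliffordInclusion (x y : L) :
    Commute (envelopingInclusion Q x) (cliffordInclusion Q y) := by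
  simp [commute_iff_eq, envelopingInclusion_apply, cliffordInclusion_apply]

variable {Q} {B : LinearMap.BilinForm k L}

theorem isCliffordMap_cliffordInclusion (hB : B.IsSymm)
    (hQ : ∀ x, Q x = B x x) : IsCliffordMap B (cliffordInclusion Q) := fun x y => by
  have polar_eq : QuadraticMap.polar Q x y = 2 * B x y := by
    simp only [QuadraticMap.polar, hQ, map_add, LinearMap.add_apply, hB.eq y x]
    ring
  have h := congrArg (fun a : CliffordAlgebra Q => (1 : UniversalEnvelopingAlgebra k L) ⊗ₜ[k] a)
    (ι_mul_ι_add_swap (Q := Q) x y)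
  rw [polar_eq, Algebra.algebraMap_eq_smul_one] at h
  simpa [cliffordInclusion_apply, tmul_add, Algebra.TensorProduct.one_def] using h

variable {κ κH : Type*} [Fintype κ] [Fintype κH]

theorem DualFrame.cubic_cliffordInclusion (F : DualFrame B κ) (m : L →ₗ[k] Module.End k L) :
    F.cubic (cliffordInclusion Q) m = 1 ⊗ₜ F.cubic (ι Q) m := by
  simp [cubic_apply, quad_apply, cliffordInclusion_apply, tmul_sum, Finset.mul_sum]

theorem DualFrame.relSpin_cliffordInclusion (F : DualFrame B κ) (p : Module.End k L) (z : L) :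
    F.relSpin (cliffordInclusion Q) p z = 1 ⊗ₜ F.relSpin (ι Q) p z := by
  rw [relSpin_apply, relSpin_apply, tmul_smul]
  simp [quad_apply, cliffordInclusion_apply, tmul_sum]

theorem DualFrame.relAction_inclusion (F : DualFrame B κ) (p : Module.End k L)
    {H : LieSubalgebra k L} (z : H) :
    F.relAction (cliffordInclusion Q) (envelopingInclusion Q) p H z
      = UniversalEnvelopingAlgebra.ι k (z : L) ⊗ₜ 1 + 1 ⊗ₜ F.relSpin (ι Q) p z := by
  rw [← F.relSpin_cliffordInclusion]
  rfl

theorem DualFrame.sum_envelopingInclusion_mul (F : DualFrame B (κH ⊕ κ)) :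
    ∑ u, envelopingInclusion Q (F.dual u) * envelopingInclusion Q (F.vec u)
      = (∑ a, UniversalEnvelopingAlgebra.ι k (F.dual (Sum.inl a))
              * UniversalEnvelopingAlgebra.ι k (F.vec (Sum.inl a))
          + ∑ i, UniversalEnvelopingAlgebra.ι k (F.dual (Sum.inr i))
              * UniversalEnvelopingAlgebra.ι k (F.vec (Sum.inr i))) ⊗ₜ 1 := by
  simp [Fintype.sum_sum_type, envelopingInclusion_apply, add_tmul, sum_tmul]

variable [NeZero (2 : k)] [NeZero (3 : k)]

theorem twelve_smul_add_gamma (x : UniversalEnvelopingAlgebra k L ⊗[k] CliffordAlgebra Q)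
    (s : CliffordAlgebra Q) :
    (12 : k) • (x + 1 ⊗ₜ[k] ((2 : k) • (-(1 / 24 : k)) • s)) = (12 : k) • x - 1 ⊗ₜ[k] s := by
  have scale : (12 : k) * (2 * -(1 / 24)) = -1 := by
    rw [← mul_assoc, mul_neg, mul_one_div, neg_inj, div_eq_iff (twentyfour_ne_zero k)]
    norm_num
  rw [smul_add, smul_smul, ← tmul_smul, smul_smul, scale, neg_one_smul, tmul_neg, sub_eq_add_neg]

theorem DualFrame.adDirac_inclusion (F : DualFrame B κ) :
    F.adDirac (cliffordInclusion Q) (envelopingInclusion Q)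
      = (12 : k) • (∑ u, UniversalEnvelopingAlgebra.ι k (F.vec u) ⊗ₜ[k] ι Q (F.dual u)
          + 1 ⊗ₜ[k] ((2 : k) • -(1 / 24 : k) • ∑ u, ∑ v,
              ι Q (F.dual u) * ι Q (F.dual v) * ι Q ⁅F.vec u, F.vec v⁆)) := by
  rw [twelve_smul_add_gamma, ← F.adCubic_eq_sum_sum]
  simp only [adDirac, dirac, envelopingInclusion_mul_cliffordInclusion, cubic_cliffordInclusion,
    adCubic]

theorem DualFrame.relDirac_inclusion (F : DualFrame B (κH ⊕ κ)) {p : Module.End k L}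
    (hinl : ∀ a, p (F.vec (Sum.inl a)) = 0)
    (hinr : ∀ i, p (F.vec (Sum.inr i)) = F.vec (Sum.inr i)) :
    F.relDirac (cliffordInclusion Q) (envelopingInclusion Q) p
      = (12 : k) • (∑ i, UniversalEnvelopingAlgebra.ι k (F.vec (Sum.inr i))
              ⊗ₜ[k] ι Q (F.dual (Sum.inr i))
          + 1 ⊗ₜ[k] ((2 : k) • -(1 / 24 : k) • ∑ i, ∑ j,
              ι Q (F.dual (Sum.inr i)) * ι Q (F.dual (Sum.inr j))
                * ι Q (p ⁅F.vec (Sum.inr i), F.vec (Sum.inr j)⁆))) := by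
  rw [F.relDirac_eq_sum _ _ hinl hinr, twelve_smul_add_gamma]
  simp only [envelopingInclusion_mul_cliffordInclusion]
  simp [cliffordInclusion_apply, tmul_sum]

theorem IsReductiveProjection.adDirac_relAction_inclusion {H : LieSubalgebra k L}
    {p : Module.End k L} (hp : IsReductiveProjection B H p) (F : DualFrame B κ)
    (G : DualFrame (B.comp (H.incl : H →ₗ[k] L) (H.incl : H →ₗ[k] L)) κH)
    (hB : B.lieInvariant L) (hQ : ∀ x, Q x = B x x) :
    G.adDirac (cliffordInclusion Q ∘ₗ (H.incl : H →ₗ[k] L))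
        (F.relAction (cliffordInclusion Q) (envelopingInclusion Q) p H)
      = (12 : k) • (∑ a, UniversalEnvelopingAlgebra.ι k (G.vec a : L) ⊗ₜ[k] ι Q (G.dual a : L)
          + ∑ a, 1 ⊗ₜ[k] (ι Q (G.dual a : L) * F.relSpin (ι Q) p (G.vec a))
          + 1 ⊗ₜ[k] ((2 : k) • -(1 / 24 : k) • ∑ a, ∑ b,
              ι Q (G.dual a : L) * ι Q (G.dual b : L) * ι Q ⁅(G.vec a : L), (G.vec b : L)⁆)) := by
  rw [hp.adDirac_relAction F G hB (isCliffordMap_cliffordInclusion F.symm hQ),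
    twelve_smul_add_gamma]
  simp only [envelopingInclusion_mul_cliffordInclusion, F.relSpin_cliffordInclusion]
  rw [G.adCubic_eq_sum_sum]
  simp [cliffordInclusion_apply, tmul_sum]

end Tensor

theorem kostant_dirac_squared_general
    {k : Type*} [Field k] [NeZero (2 : k)] [NeZero (3 : k)]
    {g : Type*} [LieRing g] [LieAlgebra k g]
    (B : LinearMap.BilinForm k g)
    (hsymm : ∀ X Y : g, B X Y = B Y X)
    (hinv : ∀ X Y Z : g, B ⁅X, Y⁆ Z = B X ⁅Y, Z⁆)
    (H : LieSubalgebra k g) (P : Submodule k g)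
    (hP : P = B.orthogonal H.toSubmodule)
    (pp : g →ₗ[k] g)
    (hpp_mem : ∀ X : g, pp X ∈ P)
    (hpp_P : ∀ Y ∈ P, pp Y = Y)
    (hpp_H : ∀ Z ∈ H, pp Z = 0)
    {A' : Type*} [Fintype A'] [DecidableEq A']
    (bh : A' → g) (hbh : ∀ a, bh a ∈ H)
    (bhd : A' → g) (hbhd : ∀ a, bhd a ∈ H)
    (hdualh : ∀ a c, B (bhd a) (bh c) = if a = c then 1 else 0)
    {I : Type*} [Fintype I] [DecidableEq I]
    (bp : I → g) (hbp : ∀ i, bp i ∈ P)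
    (bpd : I → g) (hbpd : ∀ i, bpd i ∈ P)
    (hdualp : ∀ i j, B (bpd i) (bp j) = if i = j then 1 else 0)
    (hspan : Submodule.span k (Set.range (Sum.elim bh bp)) = ⊤)
    (hres : ∀ a : A', ∀ x ∈ H.toSubmodule,
      (LieAlgebra.ad k g (bhd a) ∘ₗ LieAlgebra.ad k g (bh a)) x ∈ H.toSubmodule)
    (Q : QuadraticForm k g) (hQ : ∀ X : g, Q X = B X X)
    (adsp : g → CliffordAlgebra Q)
    (hadsp : ∀ X : g, adsp X = (-(1/4 : k)) • ∑ i, ι Q (bpd i) * ι Q (pp ⁅X, bp i⁆))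
    (γg γh γp : CliffordAlgebra Q)
    (hγg : γg = (-(1/24 : k)) • ∑ u : A' ⊕ I, ∑ v : A' ⊕ I,
        ι Q (Sum.elim bhd bpd u) * ι Q (Sum.elim bhd bpd v)
          * ι Q ⁅Sum.elim bh bp u, Sum.elim bh bp v⁆)
    (hγh : γh = (-(1/24 : k)) • ∑ a, ∑ c,
        ι Q (bhd a) * ι Q (bhd c) * ι Q ⁅bh a, bh c⁆)
    (hγp : γp = (-(1/24 : k)) • ∑ i, ∑ j,
        ι Q (bpd i) * ι Q (bpd j) * ι Q (pp ⁅bp i, bp j⁆))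
    (ρ' : g → UniversalEnvelopingAlgebra k g ⊗[k] CliffordAlgebra Q)
    (hρ' : ∀ Z : g, ρ' Z = UniversalEnvelopingAlgebra.ι k Z ⊗ₜ[k] (1 : CliffordAlgebra Q)
        + (1 : UniversalEnvelopingAlgebra k g) ⊗ₜ[k] adsp Z)
    (Dg Dh' Dgh : UniversalEnvelopingAlgebra k g ⊗[k] CliffordAlgebra Q)
    (hDg : Dg = (∑ u : A' ⊕ I, UniversalEnvelopingAlgebra.ι k (Sum.elim bh bp u)
                  ⊗ₜ[k] ι Q (Sum.elim bhd bpd u))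
              + (1 : UniversalEnvelopingAlgebra k g) ⊗ₜ[k] ((2 : k) • γg))
    (hDh' : Dh' = (∑ a, UniversalEnvelopingAlgebra.ι k (bh a) ⊗ₜ[k] ι Q (bhd a))
              + (∑ a, (1 : UniversalEnvelopingAlgebra k g) ⊗ₜ[k] (ι Q (bhd a) * adsp (bh a)))
              + (1 : UniversalEnvelopingAlgebra k g) ⊗ₜ[k] ((2 : k) • γh))
    (hDgh : Dgh = (∑ i, UniversalEnvelopingAlgebra.ι k (bp i) ⊗ₜ[k] ι Q (bpd i))
              + (1 : UniversalEnvelopingAlgebra k g) ⊗ₜ[k] ((2 : k) • γp)) :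
    Dgh * Dgh = Dg * Dg - Dh' * Dh'
    ∧ Dgh * Dgh
      = (∑ a, UniversalEnvelopingAlgebra.ι k (bhd a) * UniversalEnvelopingAlgebra.ι k (bh a)
          + ∑ i, UniversalEnvelopingAlgebra.ι k (bpd i) * UniversalEnvelopingAlgebra.ι k (bp i))
          ⊗ₜ[k] (1 : CliffordAlgebra Q)
        - (∑ a, ρ' (bhd a) * ρ' (bh a))
        + ((1/24 : k) *
            ((∑ u : A' ⊕ I, LinearMap.trace k g
                (LieAlgebra.ad k g (Sum.elim bhd bpd u) ∘ₗ LieAlgebra.ad k g (Sum.elim bh bp u)))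
             - ∑ a, LinearMap.trace k H.toSubmodule
                ((LieAlgebra.ad k g (bhd a) ∘ₗ LieAlgebra.ad k g (bh a)).restrict (hres a))))
          • (1 : UniversalEnvelopingAlgebra k g ⊗[k] CliffordAlgebra Q) := by
  subst hP
  have hB : B.IsSymm := ⟨hsymm⟩
  have hBinv : B.lieInvariant g := DualFrame.lieInvariant_of_apply_lie hinv
  have hp := IsReductiveProjection.of_codisjoint hB (codisjoint_of_span_sumElim hbh hbp hspan)
    hpp_mem hpp_P hpp_H
  let F := DualFrame.ofDualFamilies hB (Sum.elim bh bp) (Sum.elim bhd bpd)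
    (sumElim_dual_of_mem_orthogonal hB hbh hbhd hbp hbpd hdualh hdualp) hspan
  let G := F.restrict (H := H) hbh hbhd fun i z hz => (hB.eq _ _).trans (hbpd i z hz)
  have hinl : ∀ a, pp (F.vec (Sum.inl a)) = 0 := fun a => hpp_H _ (hbh a)
  have hinr : ∀ i, pp (F.vec (Sum.inr i)) = F.vec (Sum.inr i) := fun i => hpp_P _ (hbp i)
  have spin : ∀ z ∈ H, adsp z = F.relSpin (ι Q) pp z := fun z hz =>
    (hadsp z).trans (hp.relSpin_eq_sum F (ι Q) hBinv hinl hinr hz).symm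
  have dirac_g : F.adDirac (cliffordInclusion Q) (envelopingInclusion Q) = (12 : k) • Dg := by
    rw [hDg, hγg]
    exact F.adDirac_inclusion
  have dirac_rel : F.relDirac (cliffordInclusion Q) (envelopingInclusion Q) pp
      = (12 : k) • Dgh := by
    rw [hDgh, hγp]
    exact F.relDirac_inclusion hinl hinr
  have dirac_h : G.adDirac (cliffordInclusion Q ∘ₗ (H.incl : H →ₗ[k] g))
      (F.relAction (cliffordInclusion Q) (envelopingInclusion Q) pp H) = (12 : k) • Dh' := by
    simp only [hDh', hγh, spin _ (hbh _)]
    exact hp.adDirac_relAction_inclusion F G hBinv hQ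
  have action : ∀ z : H,
      F.relAction (cliffordInclusion Q) (envelopingInclusion Q) pp H z = ρ' z := fun z => by
    rw [hρ', spin z z.2, F.relAction_inclusion]
  have hc := isCliffordMap_cliffordInclusion hB hQ
  have hrc := commute_envelopingInclusion_cliffordInclusion Q
  have difference := hp.relDirac_mul_self F G hBinv hc (envelopingInclusion_lie Q) hrc
  have explicit := hp.relDirac_mul_self_eq_sum F G hBinv hc (envelopingInclusion_lie Q) hrc
  have cancel := smul_right_injective (UniversalEnvelopingAlgebra k g ⊗[k] CliffordAlgebra Q)
    (mul_ne_zero (twelve_ne_zero k) (twelve_ne_zero k))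
  rw [dirac_rel, dirac_g, dirac_h] at difference
  rw [dirac_rel, F.sum_envelopingInclusion_mul, F.trace_adCasimir, G.trace_adCasimir] at explicit
  simp only [smul_mul_smul_comm, ← smul_sub, action] at difference explicit
  exact ⟨cancel difference, cancel explicit⟩

/-- Square of Kostant's cubic Dirac operator: in `A = U(𝔤) ⊗ Cl(𝔤)` one has
`D_{𝔤/𝔥}² = D_𝔤² − (D'_𝔥)²`, and explicitly
`D_{𝔤/𝔥}² = (Σₐ ιU(Z*ₐ) ιU(Zₐ) + Σᵢ ιU(Y*ᵢ) ιU(Yᵢ)) ⊗ 1 − Σₐ ρ'(Z*ₐ) ρ'(Zₐ)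
  + (1/24) (Σᵤ tr_𝔤(ad x*ᵤ ∘ ad xᵤ) − Σₐ tr_𝔥((ad Z*ₐ ∘ ad Zₐ)|_𝔥)) · 1`,
where `ρ'(Z) = ιU(Z) ⊗ 1 + 1 ⊗ ads_𝔭(Z)`. -/
theorem kostant_dirac_squared
    {k : Type*} [Field k] [CharZero k]
    {g : Type*} [LieRing g] [LieAlgebra k g]
    (B : LinearMap.BilinForm k g)
    (hsymm : ∀ X Y : g, B X Y = B Y X)
    (hnondeg : B.Nondegenerate)
    (hinv : ∀ X Y Z : g, B ⁅X, Y⁆ Z = B X ⁅Y, Z⁆)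
    (H : LieSubalgebra k g) (P : Submodule k g)
    (hHnd : ∀ Z ∈ H, (∀ W ∈ H, B Z W = 0) → Z = 0)
    (hP : P = B.orthogonal H.toSubmodule)
    (hcompl : IsCompl H.toSubmodule P)
    (pp : g →ₗ[k] g)
    (hpp_mem : ∀ X : g, pp X ∈ P)
    (hpp_P : ∀ Y ∈ P, pp Y = Y)
    (hpp_H : ∀ Z ∈ H, pp Z = 0)
    {A' : Type*} [Fintype A'] [DecidableEq A']
    (bh : A' → g) (hbh : ∀ a, bh a ∈ H)
    (bhd : A' → g) (hbhd : ∀ a, bhd a ∈ H)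
    (hdualh : ∀ a c, B (bhd a) (bh c) = if a = c then 1 else 0)
    {I : Type*} [Fintype I] [DecidableEq I]
    (bp : I → g) (hbp : ∀ i, bp i ∈ P)
    (bpd : I → g) (hbpd : ∀ i, bpd i ∈ P)
    (hdualp : ∀ i j, B (bpd i) (bp j) = if i = j then 1 else 0)
    (hindep : LinearIndependent k (Sum.elim bh bp))
    (hspan : Submodule.span k (Set.range (Sum.elim bh bp)) = ⊤)
    (hres : ∀ a : A', ∀ x ∈ H.toSubmodule,
      (LieAlgebra.ad k g (bhd a) ∘ₗ LieAlgebra.ad k g (bh a)) x ∈ H.toSubmodule)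
    (Q : QuadraticForm k g) (hQ : ∀ X : g, Q X = B X X)
    (adsp : g → CliffordAlgebra Q)
    (hadsp : ∀ X : g, adsp X = (-(1/4 : k)) • ∑ i, ι Q (bpd i) * ι Q (pp ⁅X, bp i⁆))
    (γg γh γp : CliffordAlgebra Q)
    (hγg : γg = (-(1/24 : k)) • ∑ u : A' ⊕ I, ∑ v : A' ⊕ I,
        ι Q (Sum.elim bhd bpd u) * ι Q (Sum.elim bhd bpd v)
          * ι Q ⁅Sum.elim bh bp u, Sum.elim bh bp v⁆)
    (hγh : γh = (-(1/24 : k)) • ∑ a, ∑ c,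
        ι Q (bhd a) * ι Q (bhd c) * ι Q ⁅bh a, bh c⁆)
    (hγp : γp = (-(1/24 : k)) • ∑ i, ∑ j,
        ι Q (bpd i) * ι Q (bpd j) * ι Q (pp ⁅bp i, bp j⁆))
    (ρ' : g → UniversalEnvelopingAlgebra k g ⊗[k] CliffordAlgebra Q)
    (hρ' : ∀ Z : g, ρ' Z = UniversalEnvelopingAlgebra.ι k Z ⊗ₜ[k] (1 : CliffordAlgebra Q)
        + (1 : UniversalEnvelopingAlgebra k g) ⊗ₜ[k] adsp Z)
    (Dg Dh' Dgh : UniversalEnvelopingAlgebra k g ⊗[k] CliffordAlgebra Q)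
    (hDg : Dg = (∑ u : A' ⊕ I, UniversalEnvelopingAlgebra.ι k (Sum.elim bh bp u)
                  ⊗ₜ[k] ι Q (Sum.elim bhd bpd u))
              + (1 : UniversalEnvelopingAlgebra k g) ⊗ₜ[k] ((2 : k) • γg))
    (hDh' : Dh' = (∑ a, UniversalEnvelopingAlgebra.ι k (bh a) ⊗ₜ[k] ι Q (bhd a))
              + (∑ a, (1 : UniversalEnvelopingAlgebra k g) ⊗ₜ[k] (ι Q (bhd a) * adsp (bh a)))
              + (1 : UniversalEnvelopingAlgebra k g) ⊗ₜ[k] ((2 : k) • γh))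
    (hDgh : Dgh = (∑ i, UniversalEnvelopingAlgebra.ι k (bp i) ⊗ₜ[k] ι Q (bpd i))
              + (1 : UniversalEnvelopingAlgebra k g) ⊗ₜ[k] ((2 : k) • γp)) :
    Dgh * Dgh = Dg * Dg - Dh' * Dh'
    ∧ Dgh * Dgh
      = (∑ a, UniversalEnvelopingAlgebra.ι k (bhd a) * UniversalEnvelopingAlgebra.ι k (bh a)
          + ∑ i, UniversalEnvelopingAlgebra.ι k (bpd i) * UniversalEnvelopingAlgebra.ι k (bp i))
          ⊗ₜ[k] (1 : CliffordAlgebra Q)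
        - (∑ a, ρ' (bhd a) * ρ' (bh a))
        + ((1/24 : k) *
            ((∑ u : A' ⊕ I, LinearMap.trace k g
                (LieAlgebra.ad k g (Sum.elim bhd bpd u) ∘ₗ LieAlgebra.ad k g (Sum.elim bh bp u)))
             - ∑ a, LinearMap.trace k H.toSubmodule
                ((LieAlgebra.ad k g (bhd a) ∘ₗ LieAlgebra.ad k g (bh a)).restrict (hres a))))
          • (1 : UniversalEnvelopingAlgebra k g ⊗[k] CliffordAlgebra Q) :=
  kostant_dirac_squared_general B hsymm hinv H P hP pp hpp_mem hpp_P hpp_H bh hbh bhd hbhd hdualh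
    bp hbp bpd hbpd hdualp hspan hres Q hQ adsp hadsp γg γh γp hγg hγh hγp ρ' hρ' Dg Dh' Dgh
    hDg hDh' hDgh
end

section
/- Let E be a real inner product space, S a finite set of vectors in E, and λ, μ ∈ E such that ⟨λ, α⟩ > 0 and ⟨μ, α⟩ ≥ 0 for every α ∈ S, and such that λ − μ = Σ_{α∈S} c_α·α for some nonnegative real coefficients c_α. Then ‖μ‖ ≤ ‖λ‖, and ‖μ‖ = ‖λ‖ holds if and only if μ = λ. -/
open RealInnerProductSpace

section SeminormedAddCommGroup

variable {ι E : Type*} [SeminormedAddCommGroup E] [InnerProductSpace ℝ E]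

theorem inner_sum_smul_nonneg {s : Finset ι} {c : ι → ℝ} {v : ι → E} {x : E}
    (hc : ∀ i ∈ s, 0 ≤ c i) (hx : ∀ i ∈ s, 0 ≤ ⟪x, v i⟫) :
    0 ≤ ⟪x, ∑ i ∈ s, c i • v i⟫ := by
  simp_rw [inner_sum, real_inner_smul_right]
  exact Finset.sum_nonneg fun i hi ↦ mul_nonneg (hc i hi) (hx i hi)

theorem norm_sq_add_norm_sub_sq_le_of_inner_sub_nonneg {x y : E} (h : 0 ≤ ⟪x, y - x⟫) :
    ‖x‖ ^ 2 + ‖y - x‖ ^ 2 ≤ ‖y‖ ^ 2 :=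
  calc
    ‖x‖ ^ 2 + ‖y - x‖ ^ 2 ≤ ‖x‖ ^ 2 + 2 * ⟪x, y - x⟫ + ‖y - x‖ ^ 2 := by linarith
    _ = ‖x + (y - x)‖ ^ 2 := (norm_add_sq_real x (y - x)).symm
    _ = ‖y‖ ^ 2 := by rw [add_sub_cancel]

theorem norm_le_of_inner_sub_nonneg {x y : E} (h : 0 ≤ ⟪x, y - x⟫) : ‖x‖ ≤ ‖y‖ :=
  le_of_sq_le_sq
    ((le_add_of_nonneg_right (sq_nonneg ‖y - x‖)).trans
      (norm_sq_add_norm_sub_sq_le_of_inner_sub_nonneg h))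
    (norm_nonneg y)

end SeminormedAddCommGroup

section NormedAddCommGroup

variable {ι E : Type*} [NormedAddCommGroup E] [InnerProductSpace ℝ E]

theorem norm_eq_iff_of_inner_sub_nonneg {x y : E} (h : 0 ≤ ⟪x, y - x⟫) :
    ‖x‖ = ‖y‖ ↔ x = y := by
  refine ⟨fun hxy ↦ ?_, congrArg norm⟩
  have hsq : ‖y - x‖ ^ 2 ≤ 0 := by
    simpa [hxy] using norm_sq_add_norm_sub_sq_le_of_inner_sub_nonneg h
  have hnorm : ‖y - x‖ = 0 := sq_nonpos_iff _ |>.mp hsq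
  exact (sub_eq_zero.mp (norm_eq_zero.mp hnorm)).symm

theorem norm_le_of_dominant_difference_general {s : Finset ι} {v : ι → E} {lam mu : E}
    {c : ι → ℝ} (hmu : ∀ i ∈ s, 0 ≤ ⟪mu, v i⟫) (hc : ∀ i ∈ s, 0 ≤ c i)
    (hsum : lam - mu = ∑ i ∈ s, c i • v i) :
    ‖mu‖ ≤ ‖lam‖ ∧ (‖mu‖ = ‖lam‖ ↔ mu = lam) := by
  have hinner : 0 ≤ ⟪mu, lam - mu⟫ := hsum ▸ inner_sum_smul_nonneg hc hmu
  exact ⟨norm_le_of_inner_sub_nonneg hinner, norm_eq_iff_of_inner_sub_nonneg hinner⟩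

end NormedAddCommGroup

/-- Let `E` be a real inner product space, `S` a finite set of vectors, and `lam, mu ∈ E`
with `⟪lam, α⟫ > 0` and `⟪mu, α⟫ ≥ 0` for every `α ∈ S`, such that
`lam - mu = Σ_{α ∈ S} c α • α` with nonnegative coefficients `c α`. Then `‖mu‖ ≤ ‖lam‖`,
with equality if and only if `mu = lam`. -/
theorem norm_le_of_dominant_difference
    {E : Type*} [NormedAddCommGroup E] [InnerProductSpace ℝ E]
    (S : Finset E) (lam mu : E) (c : E → ℝ)
    (hlam : ∀ α ∈ S, 0 < ⟪lam, α⟫)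
    (hmu : ∀ α ∈ S, 0 ≤ ⟪mu, α⟫)
    (hc : ∀ α ∈ S, 0 ≤ c α)
    (hsum : lam - mu = ∑ α ∈ S, c α • α) :
    ‖mu‖ ≤ ‖lam‖ ∧ (‖mu‖ = ‖lam‖ ↔ mu = lam) :=
  norm_le_of_dominant_difference_general (v := id) hmu hc hsum
end
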